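/- Let r ≥ 4 and let H be an r-graph on s vertices that is embeddable in a 2-reducible r-tree, with cross-cut number σ = σ(H) ≥ 2; let β = 1/((r−2)(σ+1)+1). There exists n(r,s) such that for every n ≥ n(r,s), every real K ≥ 0, and every family F of r-subsets of [n] containing no copy of H with |F| ≥ (σ−1)·binom(n,r−1) − K·n^{r−1−β}, there exists a set A ⊆ [n] with |A| = σ−1 such that |L_F(A)| ≥ binom(n,r−1) − (r−1)(K+2s²)·n^{r−1−β}, and moreover the number of edges of F that do not meet A in exactly one vertex is at most ((σ−1)(r−1)(K+2s²)+2s²)·n^{r−1−β}. -/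

import Mathlib

/-!
Write `b = r - 2` and let `t` be the number of vertices of a fixed 2-reducible `r`-tree `T`
containing `H`. Call an `(r - 1)`-set *rich* if it has more than `t` extensions to an edge of `F`.

*Embedding.* Every edge of `T` has two private vertices. A family of `k`-sets with more than
`t * n ^ (k - 1)` members contains a subfamily in which every `(k - 1)`-set covered by a member is
covered by more than `t` of them, and trees embed greedily in such a subfamily. Deleting private
vertices or cross-cut vertices from `T`, embedding the trimmed tree greedily and putting the deleted
vertices back yields, for an `H`-free family `F`:
* there are `O(n ^ (r - 2))` rich sets;
* any `σ` vertices have `O(n ^ (r - 2))` common neighbours in `F` and `O(n ^ (r - 3))` common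
  neighbours among the rich sets;
* all but `O(n ^ (r - 2))` edges of `F` have at most one `(r - 1)`-subset that is not rich.

*Counting.* An edge `e` with at most one non-rich `(r - 1)`-subset has a centre: a vertex `x ∈ e`
such that all `(r - 1)`-subsets of `e` through `x` are rich. The sets `e \ {x}` with centre `x` form
a family whose shadow lies in the link of `x` in the rich sets. By Kruskal–Katona, the vertices
that are the centre of fewer than `C(k, r - 1)` edges contribute at most `k * O(n ^ (r - 2))`
edges, and the number `w` of other vertices, the hubs, satisfies `w * C(k, r - 2) = O(n ^ (r - 2))`.
With `k` a small multiple of `n ^ (1 - β)` both errors are below `n ^ (r - 1 - β)`. An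
`(r - 1)`-set has at most `σ - 1` centres among the `w` hubs, up to `w ^ σ * O(n ^ (r - 2))`
exceptions, so `|F| ≤ (σ - 1) C(n, r - 1) + n ^ (r - 1 - β)`, and if `F` is large, almost all
`(r - 1)`-sets have exactly `σ - 1` centres. Sorting these sets by their set `A` of centres gives
classes whose shadows are almost disjoint, because any `σ` vertices have few common rich neighbours.
Kruskal–Katona applied to each class shows that the largest class contains almost all
`(r - 1)`-sets, and its set `A` is the required one.
-/

open Finset
open scoped Classical

noncomputable section

variable {α β : Type*}

/-- The vertex set of a hypergraph given by its finite edge set. -/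
def hverts [DecidableEq α] (H : Finset (Finset α)) : Finset α := H.sup id

/-- `E 0, E 1, …, E (m-1)` is a tree-defining ordering: every edge after the first
has a parent among the earlier edges containing its intersection with the union of
all earlier edges. -/
def IsTreeOrder {m : ℕ} [DecidableEq α] (E : Fin m → Finset α) : Prop :=
  ∀ i : Fin m, 0 < i.1 → ∃ j : Fin m, j < i ∧ E i ∩ (Finset.Iio i).sup E ⊆ E j

/-- A tight tree-defining ordering for an `r`-uniform hypergraph. -/
def IsTightTreeOrder {m : ℕ} [DecidableEq α] (r : ℕ) (E : Fin m → Finset α) : Prop :=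
  ∀ i : Fin m, 0 < i.1 → ∃ j : Fin m, j < i ∧ E i ∩ (Finset.Iio i).sup E ⊆ E j ∧
    (E i ∩ E j).card = r - 1

/-- `H` is an `r`-tree: its edges admit a tree-defining ordering (with multiplicities
allowed in the ordering), and all edges have `r` vertices. -/
def IsRTree [DecidableEq α] (r : ℕ) (H : Finset (Finset α)) : Prop :=
  ∃ (m : ℕ) (E : Fin m → Finset α),
    H = Finset.image E Finset.univ ∧ IsTreeOrder E ∧ ∀ i, (E i).card = r

/-- `H` is a tight `r`-tree. -/
def IsTightRTree [DecidableEq α] (r : ℕ) (H : Finset (Finset α)) : Prop :=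
  ∃ (m : ℕ) (E : Fin m → Finset α),
    H = Finset.image E Finset.univ ∧ IsTightTreeOrder r E ∧ ∀ i, (E i).card = r

/-- The degree of a vertex: the number of edges containing it. -/
def hdeg [DecidableEq α] (H : Finset (Finset α)) (x : α) : ℕ :=
  (H.filter (fun E => x ∈ E)).card

/-- `H` is `k`-reducible: every edge contains at least `k` vertices of degree 1. -/
def Reducible [DecidableEq α] (k : ℕ) (H : Finset (Finset α)) : Prop :=
  ∀ E ∈ H, k ≤ (E.filter (fun x => hdeg H x = 1)).card

/-- `S` is a cross-cut of `H`: it meets every edge in exactly one vertex. -/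
def IsCrossCut [DecidableEq α] (H : Finset (Finset α)) (S : Finset α) : Prop :=
  ∀ E ∈ H, (E ∩ S).card = 1

/-- The cross-cut number: minimum size of a cross-cut. -/
def crossCutNum [DecidableEq α] (H : Finset (Finset α)) : ℕ :=
  sInf {k | ∃ S : Finset α, IsCrossCut H S ∧ S.card = k}

/-- `S` is a vertex cover of `H`. -/
def IsVertexCover [DecidableEq α] (H : Finset (Finset α)) (S : Finset α) : Prop :=
  ∀ E ∈ H, (E ∩ S).Nonempty

/-- The vertex cover number: minimum size of a vertex cover. -/
def coverNum [DecidableEq α] (H : Finset (Finset α)) : ℕ :=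
  sInf {k | ∃ S : Finset α, IsVertexCover H S ∧ S.card = k}

/-- `G` contains a copy of `H`, i.e. `H` is embeddable in `G`. -/
def ContainsCopy [DecidableEq α] [DecidableEq β] (G : Finset (Finset β))
    (H : Finset (Finset α)) : Prop :=
  ∃ f : α → β, Set.InjOn f ↑(H.sup id) ∧ ∀ E ∈ H, E.image f ∈ G

/-- The Turán number `ex(n, H)`: the maximum size of an `r`-uniform family on `[n]`
containing no copy of `H`. -/
def exNum [DecidableEq α] (n r : ℕ) (H : Finset (Finset α)) : ℕ :=
  sSup {N | ∃ F : Finset (Finset (Fin n)), (∀ E ∈ F, E.card = r) ∧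
    ¬ ContainsCopy F H ∧ F.card = N}


/-- The common link `L_F(A)`: all sets `D ⊆ [n] ∖ A` with `D ∪ {a} ∈ F` for every `a ∈ A`. -/
def commonLink {n : ℕ} (F : Finset (Finset (Fin n))) (A : Finset (Fin n)) :
    Finset (Finset (Fin n)) :=
  Finset.univ.filter (fun D : Finset (Fin n) => Disjoint D A ∧ ∀ a ∈ A, insert a D ∈ F)

/-- The exponent `β = 1/((r-2)(σ+1)+1)`. -/
def betaExp (r σ : ℕ) : ℝ := 1 / (((r : ℝ) - 2) * ((σ : ℝ) + 1) + 1)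

open scoped FinsetFamily

/-! ### Greedy embedding of trees -/

section Embedding

variable [DecidableEq α] [DecidableEq β]

lemma mem_hverts {H : Finset (Finset α)} {x : α} : x ∈ hverts H ↔ ∃ e ∈ H, x ∈ e := mem_sup

lemma subset_hverts {H : Finset (Finset α)} {e : Finset α} (he : e ∈ H) : e ⊆ hverts H :=
  le_sup (f := id) he

lemma ContainsCopy.trans {γ : Type*} [DecidableEq γ] {G : Finset (Finset γ)}
    {T : Finset (Finset β)} {H : Finset (Finset α)} (hGT : ContainsCopy G T)
    (hTH : ContainsCopy T H) : ContainsCopy G H := by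
  obtain ⟨g, hg, hgG⟩ := hGT
  obtain ⟨f, hf, hfT⟩ := hTH
  refine ⟨g ∘ f, hg.comp hf fun x hx => ?_, fun e he => ?_⟩
  · obtain ⟨e, he, hxe⟩ := mem_hverts.1 hx
    exact mem_hverts.2 ⟨_, hfT e he, mem_image_of_mem f hxe⟩
  · simpa only [image_image] using hgG _ (hfT e he)

lemma ContainsCopy.mono {G : Finset (Finset β)} {T H : Finset (Finset α)} (hHT : H ⊆ T)
    (h : ContainsCopy G T) : ContainsCopy G H := by
  obtain ⟨f, hf, hfG⟩ := h
  exact ⟨f, hf.mono (coe_subset.2 (sup_mono hHT)), fun e he => hfG e (hHT he)⟩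

/-- The vertices that complete the set `X` to a member of `G`, i.e. the link of `X` seen as a set
of vertices. -/
def completions [Fintype β] (G : Finset (Finset β)) (X : Finset β) : Finset β :=
  {w | w ∉ X ∧ insert w X ∈ G}

lemma mem_completions [Fintype β] {G : Finset (Finset β)} {X : Finset β} {w : β} :
    w ∈ completions G X ↔ w ∉ X ∧ insert w X ∈ G := by
  simp only [completions, mem_filter_univ]

/-- A family is `t`-full if every set of its shadow is covered by more than `t` of its members;
trees with at most `t` vertices embed greedily into full families. -/
def IsFull [Fintype β] (t : ℕ) (G : Finset (Finset β)) : Prop :=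
  ∀ Y ∈ ∂ G, t < #(completions G Y)

lemma exists_isFull [Fintype β] {t : ℕ} {G : Finset (Finset β)} (h : t * #(∂ G) < #G) :
    ∃ G' ⊆ G, G'.Nonempty ∧ IsFull t G' := by
  induction G using Finset.strongInduction with
  | H G ih =>
  by_cases hfull : IsFull t G
  · exact ⟨G, Subset.rfl, card_pos.1 (by omega), hfull⟩
  simp only [IsFull, not_forall, not_lt] at hfull
  obtain ⟨Y, hY, hYt⟩ := hfull
  set D := (completions G Y).image (insert · Y) with hD
  have hmem : ∀ {e}, e ∈ D ↔ ∃ w ∈ completions G Y, insert w Y = e := mem_image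
  have hDG : D ⊆ G := fun e he => by
    obtain ⟨w, hw, rfl⟩ := hmem.1 he
    exact (mem_completions.1 hw).2
  have hDne : D.Nonempty := by
    obtain ⟨w, hw⟩ := mem_shadow_iff_insert_mem.1 hY
    exact ⟨_, hmem.2 ⟨w, mem_completions.2 hw, rfl⟩⟩
  have hshadow : ∂ (G \ D) ⊆ (∂ G).erase Y := fun Z hZ => by
    obtain ⟨w, hw, hwZ⟩ := mem_shadow_iff_insert_mem.1 hZ
    obtain ⟨hG, hnD⟩ := mem_sdiff.1 hwZ
    refine mem_erase.2 ⟨?_, mem_shadow_iff_insert_mem.2 ⟨w, hw, hG⟩⟩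
    rintro rfl
    exact hnD (hmem.2 ⟨w, mem_completions.2 ⟨hw, hG⟩, rfl⟩)
  have hlt : t * #(∂ (G \ D)) < #(G \ D) := by
    have hshadow_card : #(∂ (G \ D)) + 1 ≤ #(∂ G) := by
      rw [← card_erase_add_one hY]
      exact Nat.succ_le_succ (card_le_card hshadow)
    have hD_card : #D ≤ t := card_image_le.trans hYt
    have hG_card : #(G \ D) + #D = #G := card_sdiff_add_card_eq_card hDG
    have := Nat.mul_le_mul_left t hshadow_card
    rw [Nat.mul_succ] at this
    omega
  obtain ⟨G', hG', hfull'⟩ := ih (G \ D) (sdiff_ssubset hDG hDne) hlt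
  exact ⟨G', hG'.trans sdiff_subset, hfull'⟩

lemma IsFull.exists_disjoint [Fintype β] {t : ℕ} {G : Finset (Finset β)} (hG : IsFull t G)
    {g Z B : Finset β} (hg : g ∈ G) (hZ : Z ⊆ g) (hB : #B ≤ t) :
    ∃ g' ∈ G, Z ⊆ g' ∧ Disjoint (g' \ Z) B := by
  obtain ⟨g', hg', hmin⟩ := exists_min_image {g ∈ G | Z ⊆ g} (fun g => #((g \ Z) ∩ B))
    ⟨g, mem_filter.2 ⟨hg, hZ⟩⟩
  simp only [mem_filter] at hg' hmin
  refine ⟨g', hg'.1, hg'.2, ?_⟩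
  by_contra hd
  obtain ⟨v, hv, hvB⟩ := not_disjoint_iff.1 hd
  obtain ⟨hvg, hvZ⟩ := mem_sdiff.1 hv
  -- exchanging `v` for a completion outside `B` decreases the intersection with `B`
  obtain ⟨w, hw, hwB⟩ := exists_mem_notMem_of_card_lt_card
    (hB.trans_lt (hG (g'.erase v) (erase_mem_shadow hg'.1 hvg)))
  refine (hmin (insert w (g'.erase v)) ⟨(mem_completions.1 hw).2, fun x hx =>
    mem_insert_of_mem (mem_erase.2 ⟨ne_of_mem_of_not_mem hx hvZ, hg'.2 hx⟩)⟩).not_gt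
    (card_lt_card ((ssubset_iff_of_subset fun x hx => ?_).2 ⟨v, ?_⟩))
  · simp only [mem_inter, mem_sdiff, mem_insert, mem_erase] at hx ⊢
    grind
  · simp [hv, hvB, ne_of_mem_of_not_mem hvB hwB]

lemma exists_injOn_extension {f : α → β} {U Q : Finset α} {X : Finset β} (hf : Set.InjOn f U)
    (hUQ : Disjoint U Q) (hX : Disjoint X (U.image f)) (hQX : #Q ≤ #X) :
    ∃ f' : α → β, Set.EqOn f' f U ∧ Set.InjOn f' ↑(U ∪ Q) ∧ Set.MapsTo f' Q X := by
  cases isEmpty_or_nonempty α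
  · exact ⟨f, fun _ _ => rfl, Set.injOn_of_subsingleton f _, fun x => isEmptyElim x⟩
  have : Nonempty β := .map f ‹_›
  obtain ⟨q, hqX, hq⟩ := Q.finite_toSet.exists_injOn_of_encard_le (t := (X : Set β))
    (by simpa using hQX)
  have hUQ' : ∀ x ∈ U, x ∉ Q := fun x hx => disjoint_left.1 hUQ hx
  have heqU : Set.EqOn (Q.piecewise q f) f U := fun x hx => piecewise_eq_of_notMem _ _ _ (hUQ' x hx)
  have heqQ : Set.EqOn (Q.piecewise q f) q Q := fun x hx => piecewise_eq_of_mem _ _ _ hx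
  refine ⟨Q.piecewise q f, heqU, ?_, fun x hx => ?_⟩
  · rw [coe_union, Set.injOn_union (disjoint_coe.2 hUQ), heqU.injOn_iff, heqQ.injOn_iff]
    refine ⟨hf, hq, fun x hx y hy hxy => ?_⟩
    rw [heqU hx, heqQ hy] at hxy
    exact disjoint_right.1 hX (mem_image_of_mem f hx) (hxy ▸ hqX hy)
  · rw [heqQ hx]
    exact hqX hx

lemma IsFull.exists_extension [Fintype β] {t k : ℕ} {G : Finset (Finset β)} (hG : IsFull t G)
    (hk : (G : Set (Finset β)).Sized k) {f : α → β} {U e : Finset α} (hf : Set.InjOn f U)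
    (hU : #U ≤ t) (he : #e ≤ k) {g : Finset β} (hg : g ∈ G) (hsub : (e ∩ U).image f ⊆ g) :
    ∃ f' : α → β, Set.EqOn f' f U ∧ Set.InjOn f' ↑(U ∪ e) ∧ ∃ g' ∈ G, e.image f' ⊆ g' := by
  obtain ⟨g', hg', hsub', hdisj⟩ :=
    hG.exists_disjoint (B := U.image f) hg hsub (card_image_le.trans hU)
  have hcard : #(e \ U) ≤ #(g' \ (e ∩ U).image f) := by
    rw [card_sdiff_of_subset hsub', hk hg', ← sdiff_inter_self_left,
      card_sdiff_of_subset inter_subset_left,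
      card_image_of_injOn (hf.mono (coe_subset.2 inter_subset_right))]
    omega
  obtain ⟨f', heq, hinj, hmaps⟩ := exists_injOn_extension hf disjoint_sdiff hdisj hcard
  rw [union_sdiff_self_eq_union] at hinj
  refine ⟨f', heq, hinj, g', hg', image_subset_iff.2 fun x hx => ?_⟩
  by_cases hxU : x ∈ U
  · rw [heq hxU]
    exact hsub' (mem_image_of_mem f (mem_inter.2 ⟨hx, hxU⟩))
  · exact (mem_sdiff.1 (hmaps (mem_coe.2 (mem_sdiff.2 ⟨hx, hxU⟩)))).1

lemma sup_Iio_last {m : ℕ} (E : Fin (m + 1) → Finset α) :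
    (Iio (Fin.last m)).sup E = univ.sup (E ∘ Fin.castSucc) := by
  rw [Fin.Iio_last_eq_map, sup_map]
  rfl

lemma IsTreeOrder.comp_castSucc {m : ℕ} {E : Fin (m + 1) → Finset α} (hE : IsTreeOrder E) :
    IsTreeOrder (E ∘ Fin.castSucc) := by
  intro i hi
  obtain ⟨j, hj, hsub⟩ := hE i.castSucc hi
  refine ⟨j.castLT (Nat.lt_trans hj i.is_lt), hj, ?_⟩
  rw [Fin.Iio_castSucc, sup_map] at hsub
  exact hsub

lemma IsTreeOrder.exists_embedding [Fintype β] [Nonempty β] {t k m : ℕ} {E : Fin m → Finset α}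
    (hE : IsTreeOrder E) {G : Finset (Finset β)} (hG : IsFull t G) (hne : G.Nonempty)
    (hk : (G : Set (Finset β)).Sized k) (hV : #(univ.sup E) ≤ t) (hEk : ∀ i, #(E i) ≤ k) :
    ∃ f : α → β, Set.InjOn f ↑(univ.sup E) ∧ ∀ i, ∃ g ∈ G, (E i).image f ⊆ g := by
  induction m with
  | zero => exact ⟨Classical.arbitrary _, by simp, fun i => i.elim0⟩
  | succ m ih =>
    set U := univ.sup (E ∘ Fin.castSucc) with hU
    have hsup : univ.sup E = U ∪ E (Fin.last m) := by
      rw [Fin.univ_castSuccEmb, sup_cons, sup_map, sup_comm]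
      rfl
    have hUt : #U ≤ t := (card_le_card (hsup ▸ subset_union_left)).trans hV
    obtain ⟨f, hf, hfG⟩ := ih hE.comp_castSucc hUt fun i => hEk i.castSucc
    obtain ⟨g, hg, hsub⟩ : ∃ g ∈ G, (E (Fin.last m) ∩ U).image f ⊆ g := by
      obtain rfl | hm := Nat.eq_zero_or_pos m
      · exact hne.imp fun g hg => ⟨hg, by simp [hU]⟩
      obtain ⟨j, hj, hjsub⟩ := hE (Fin.last m) hm
      rw [sup_Iio_last] at hjsub
      obtain ⟨g, hg, hgsub⟩ := hfG (j.castLT hj)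
      exact ⟨g, hg, (image_subset_image hjsub).trans hgsub⟩
    obtain ⟨f', heq, hf', hlast⟩ := hG.exists_extension hk hf hUt (hEk (Fin.last m)) hg hsub
    refine ⟨f', hsup ▸ hf', Fin.lastCases hlast fun i => ?_⟩
    have hi : (E ∘ Fin.castSucc) i ⊆ U := le_sup (mem_univ i)
    exact image_congr (heq.mono (coe_subset.2 hi)) ▸ hfG i

lemma IsTreeOrder.sdiff {m : ℕ} {E : Fin m → Finset α} (hE : IsTreeOrder E) (R : Finset α) :
    IsTreeOrder fun i => E i \ R := by
  intro i hi
  obtain ⟨j, hj, hsub⟩ := hE i hi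
  refine ⟨j, hj, fun x hx => ?_⟩
  simp only [mem_inter, mem_sdiff, mem_sup] at hx
  obtain ⟨⟨hxi, hxR⟩, l, hl, hxl, -⟩ := hx
  exact mem_sdiff.2 ⟨hsub (mem_inter.2 ⟨hxi, mem_sup.2 ⟨l, hl, hxl⟩⟩), hxR⟩

lemma IsRTree.sized {r : ℕ} {T : Finset (Finset α)} (hT : IsRTree r T) :
    (T : Set (Finset α)).Sized r := by
  obtain ⟨m, E, rfl, -, hr⟩ := hT
  intro e he
  obtain ⟨i, -, rfl⟩ := mem_image.1 he
  exact hr i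

lemma IsRTree.exists_embedding_sdiff [Finite β] [Nonempty β] {r t k : ℕ} {T : Finset (Finset α)}
    (hT : IsRTree r T) (ht : #(hverts T) ≤ t) {R : Finset α} (hR : ∀ e ∈ T, #(e \ R) ≤ k)
    {G : Finset (Finset β)} (hk : (G : Set (Finset β)).Sized k) (hG : t * #(∂ G) < #G) :
    ∃ f : α → β, Set.InjOn f ↑(hverts T \ R) ∧ ∀ e ∈ T, ∃ g ∈ G, (e \ R).image f ⊆ g := by
  have := Fintype.ofFinite β
  obtain ⟨m, E, rfl, hE, -⟩ := hT
  obtain ⟨G', hG', hne, hfull⟩ := exists_isFull hG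
  have hsup : univ.sup (fun i => E i \ R) = hverts (univ.image E) \ R := by
    ext x
    simp only [hverts, mem_sup, mem_univ, true_and, mem_sdiff, sup_image, Function.comp, id,
      exists_and_right]
  obtain ⟨f, hf, hfG⟩ := (hE.sdiff R).exists_embedding hfull hne (hk.mono (coe_subset.2 hG'))
    (by rw [hsup]; exact (card_le_card sdiff_subset).trans ht)
    fun i => hR _ (mem_image_of_mem E (mem_univ i))
  rw [hsup] at hf
  refine ⟨f, hf, fun e he => ?_⟩
  obtain ⟨i, -, rfl⟩ := mem_image.1 he
  exact (hfG i).imp fun g hg => ⟨hG' hg.1, hg.2⟩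

/-- The vertices of `e` of degree one in `T`, that is, those in no other edge of `T`. -/
def privateVerts (T : Finset (Finset α)) (e : Finset α) : Finset α := {x ∈ e | hdeg T x = 1}

lemma eq_of_mem_privateVerts {T : Finset (Finset α)} {e e' : Finset α} {x : α} (he : e ∈ T)
    (he' : e' ∈ T) (hx : x ∈ privateVerts T e) (hx' : x ∈ e') : e' = e := by
  obtain ⟨hxe, hdeg⟩ := mem_filter.1 hx
  obtain ⟨c, hc⟩ := card_eq_one.1 hdeg
  have hedge : ∀ a ∈ T, x ∈ a → a = c := fun a ha hxa =>
    mem_singleton.1 (hc ▸ mem_filter.2 ⟨ha, hxa⟩)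
  rw [hedge e' he' hx', hedge e he hxe]

/-- `p` selects in each edge `e` of `T` private vertices outside `S`, as many as needed for
`(e \ p e) \ S` to have at most `#e - j` vertices. -/
structure IsTrimming (T : Finset (Finset α)) (S : Finset α) (j : ℕ)
    (p : Finset α → Finset α) : Prop where
  subset_private : ∀ e ∈ T, p e ⊆ privateVerts T e \ S
  card_eq : ∀ e ∈ T, #(p e) = j - #(e ∩ S)

lemma Reducible.exists_isTrimming {k j : ℕ} {T : Finset (Finset α)} (hT : Reducible k T)
    (hj : j ≤ k) (S : Finset α) : ∃ p, IsTrimming T S j p := by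
  have hedge : ∀ e ∈ T, ∃ q ⊆ privateVerts T e \ S, #q = j - #(e ∩ S) := fun e he => by
    refine exists_subset_card_eq ?_
    have hle : #(privateVerts T e ∩ S) ≤ #(e ∩ S) :=
      card_le_card (inter_subset_inter_right (filter_subset _ _))
    have hk : k ≤ #(privateVerts T e) := hT e he
    have := card_sdiff_add_card_inter (privateVerts T e) S
    omega
  choose! p hsub hcard using hedge
  exact ⟨p, hsub, hcard⟩

namespace IsTrimming

variable {T : Finset (Finset α)} {S : Finset α} {j : ℕ} {p : Finset α → Finset α} {e : Finset α}

lemma subset (hp : IsTrimming T S j p) (he : e ∈ T) : p e ⊆ e :=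
  (hp.subset_private e he).trans (sdiff_subset.trans (filter_subset _ _))

lemma disjoint (hp : IsTrimming T S j p) {e' : Finset α} (he : e ∈ T) (he' : e' ∈ T)
    (hne : e ≠ e') : Disjoint (p e) e' :=
  disjoint_left.2 fun _ hx hx' =>
    hne (eq_of_mem_privateVerts he he' (mem_sdiff.1 (hp.subset_private e he hx)).1 hx').symm

lemma disjoint_right (hp : IsTrimming T S j p) (he : e ∈ T) : Disjoint (p e) S :=
  disjoint_sdiff.symm.mono_left (hp.subset_private e he)

lemma sdiff_union_sup (hp : IsTrimming T S j p) (he : e ∈ T) :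
    e \ (S ∪ T.sup p) = (e \ p e) \ S := by
  ext x
  simp only [mem_sdiff, mem_union, mem_sup, not_or, not_exists, not_and]
  refine ⟨fun ⟨hx, hxS, hxp⟩ => ⟨⟨hx, hxp e he⟩, hxS⟩, fun ⟨⟨hx, hxp⟩, hxS⟩ =>
    ⟨hx, hxS, fun e' he' hxe' => ?_⟩⟩
  obtain rfl | hne := eq_or_ne e' e
  · exact hxp hxe'
  · exact disjoint_left.1 (hp.disjoint he' he hne) hxe' hx

lemma sdiff_inter (hp : IsTrimming T S j p) (he : e ∈ T) : (e \ p e) ∩ S = e ∩ S := by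
  rw [inter_comm, ← inter_sdiff_assoc, inter_comm,
    sdiff_eq_self_of_disjoint ((hp.disjoint_right he).symm.mono_left inter_subset_right)]

lemma card_add (hp : IsTrimming T S j p) (he : e ∈ T) :
    #((e \ p e) \ S) + (j - #(e ∩ S)) + #(e ∩ S) = #e := by
  rw [← hp.card_eq e he, ← card_sdiff_add_card_eq_card (hp.subset he),
    ← card_sdiff_add_card_inter (e \ p e) S, hp.sdiff_inter he]
  ring

end IsTrimming

lemma IsRTree.exists_trimmed_embedding [Finite β] [Nonempty β] {r t j : ℕ}
    {T : Finset (Finset α)} (hT : IsRTree r T) (ht : #(hverts T) ≤ t) {S : Finset α}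
    {p : Finset α → Finset α} (hp : IsTrimming T S j p) {G : Finset (Finset β)}
    (hG : (G : Set (Finset β)).Sized (r - j)) (hlt : t * #(∂ G) < #G) :
    ∃ f : α → β, Set.InjOn f ↑(hverts T \ (S ∪ T.sup p)) ∧
      ∀ e ∈ T, #(e ∩ S) ≤ j → ((e \ p e) \ S).image f ∈ G := by
  have hcard : ∀ e ∈ T, #((e \ p e) \ S) + (j - #(e ∩ S)) + #(e ∩ S) = r := fun e he => by
    rw [hp.card_add he, hT.sized he]
  obtain ⟨f, hf, hfG⟩ := hT.exists_embedding_sdiff ht (R := S ∪ T.sup p)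
    (fun e he => by rw [hp.sdiff_union_sup he]; have := hcard e he; omega) hG hlt
  refine ⟨f, hf, fun e he heS => ?_⟩
  obtain ⟨g, hg, hsub⟩ := hfG e he
  have hinj : Set.InjOn f ↑((e \ p e) \ S) := hf.mono <| coe_subset.2 <| by
    rw [← hp.sdiff_union_sup he]
    exact sdiff_subset_sdiff (subset_hverts he) Subset.rfl
  rw [hp.sdiff_union_sup he] at hsub
  rwa [eq_of_subset_of_card_le hsub]
  rw [card_image_of_injOn hinj, hG hg]
  have := hcard e he
  omega

/-- `Y` extends to members of `F` by `j` further vertices chosen outside any given set of at most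
`t` vertices. -/
def Extendable (F : Finset (Finset β)) (t j : ℕ) (Y : Finset β) : Prop :=
  ∀ B : Finset β, #B ≤ t → ∃ X : Finset β, #X = j ∧ Disjoint X B ∧ Y ∪ X ∈ F

lemma extendable_zero_of_mem {F : Finset (Finset β)} {t : ℕ} {Y : Finset β} (hY : Y ∈ F) :
    Extendable F t 0 Y :=
  fun B _ => ⟨∅, card_empty, disjoint_empty_left B, by rwa [union_empty]⟩

lemma exists_edges_extension {F : Finset (Finset β)} {t : ℕ} {H : Finset (Finset α)}
    {p : Finset α → Finset α} (hp : ∀ e ∈ H, p e ⊆ e)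
    (hpriv : ∀ e ∈ H, ∀ e' ∈ H, e ≠ e' → Disjoint (p e) e') {U : Finset α}
    (hU : ∀ e ∈ H, e \ p e ⊆ U) (hpU : ∀ e ∈ H, Disjoint U (p e)) (ht : #(U ∪ H.sup p) ≤ t)
    {f : α → β} (hf : Set.InjOn f U)
    (hext : ∀ e ∈ H, Extendable F t #(p e) ((e \ p e).image f)) :
    ∃ f' : α → β, Set.EqOn f' f U ∧ Set.InjOn f' ↑(U ∪ H.sup p) ∧ ∀ e ∈ H, e.image f' ∈ F := by
  induction H using Finset.induction_on with
  | empty => exact ⟨f, fun _ _ => rfl, by simpa using hf, by simp⟩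
  | insert e H heH ih =>
    simp only [mem_insert, forall_eq_or_imp] at hp hpriv hU hpU hext
    set V := U ∪ H.sup p with hV
    have hVe : U ∪ (insert e H).sup p = V ∪ p e := by
      rw [sup_insert, hV, sup_comm, sup_eq_union, union_assoc]
    rw [hVe] at ht ⊢
    obtain ⟨f₁, heq₁, hinj₁, hF₁⟩ := ih hp.2 (fun a ha b hb => (hpriv.2 a ha).2 b hb) hU.2 hpU.2
      ((card_le_card subset_union_left).trans ht) hext.2
    obtain ⟨X, hXcard, hXdisj, hXF⟩ := hext.1 (V.image f₁)
      (card_image_le.trans ((card_le_card subset_union_left).trans ht))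
    have hdisj : Disjoint V (p e) := disjoint_union_left.2 ⟨hpU.1, Finset.disjoint_sup_left.2
      fun a ha => ((hpriv.1.2 a ha (ne_of_mem_of_not_mem ha heH).symm).mono_right
        (hp.2 a ha)).symm⟩
    obtain ⟨f₂, heq₂, hinj₂, hmaps⟩ := exists_injOn_extension hinj₁ hdisj hXdisj hXcard.ge
    have heq : Set.EqOn f₂ f U := fun x hx =>
      (heq₂ (mem_coe.2 (mem_union_left _ hx))).trans (heq₁ hx)
    have hX : (p e).image f₂ = X := eq_of_subset_of_card_le (image_subset_iff.2 hmaps) <| by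
      rw [card_image_of_injOn (hinj₂.mono (coe_subset.2 subset_union_right)), hXcard]
    refine ⟨f₂, heq, hinj₂, forall_mem_insert _ _ _ |>.2 ⟨?_, fun a ha => ?_⟩⟩
    · rw [← sdiff_union_of_subset hp.1, image_union, hX,
        image_congr (heq.mono (coe_subset.2 hU.1))]
      exact hXF
    · have haV : a ⊆ V := by
        rw [← sdiff_union_of_subset (hp.2 a ha)]
        exact union_subset_union (hU.2 a ha) (le_sup ha)
      rw [image_congr (heq₂.mono (coe_subset.2 haV))]
      exact hF₁ a ha

lemma containsCopy_of_extendable {F : Finset (Finset β)} {t : ℕ} {H : Finset (Finset α)}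
    {p : Finset α → Finset α} (hp : ∀ e ∈ H, p e ⊆ e)
    (hpriv : ∀ e ∈ H, ∀ e' ∈ H, e ≠ e' → Disjoint (p e) e') (ht : #(hverts H) ≤ t)
    {f : α → β} (hf : Set.InjOn f ↑(H.sup fun e => e \ p e))
    (hext : ∀ e ∈ H, Extendable F t #(p e) ((e \ p e).image f)) : ContainsCopy F H := by
  set U := H.sup fun e => e \ p e with hU
  have hsub : ∀ e ∈ H, e \ p e ⊆ U := fun e he => le_sup (f := fun e => e \ p e) he
  have hverts_eq : hverts H = U ∪ H.sup p := by
    rw [hU, ← sup_eq_union, ← sup_sup]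
    exact sup_congr rfl fun e he => (sdiff_union_of_subset (hp e he)).symm
  have hdisj : ∀ e ∈ H, Disjoint U (p e) := fun e he => Finset.disjoint_sup_left.2 fun a ha => by
    obtain rfl | hne := eq_or_ne e a
    · exact sdiff_disjoint
    · exact ((hpriv e he a ha hne).mono_right sdiff_subset).symm
  obtain ⟨f', -, hinj, hF⟩ :=
    exists_edges_extension hp hpriv hsub hdisj (hverts_eq ▸ ht) hf hext
  exact ⟨f', by rwa [← hverts_eq] at hinj, hF⟩

end Embedding

/-! ### Families without a copy of a reducible tree -/

section TreeFree

variable [DecidableEq β] {F : Finset (Finset β)} {r t : ℕ}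

lemma IsRTree.card_le_mul_card_shadow [DecidableEq α] [Finite β] [Nonempty β] {k j : ℕ}
    {T : Finset (Finset α)} (hT : IsRTree r T) (hk : Reducible k T) (ht : #(hverts T) ≤ t)
    (hF : ¬ ContainsCopy F T) (hj : j ≤ k) {G : Finset (Finset β)}
    (hG : (G : Set (Finset β)).Sized (r - j)) (hext : ∀ Y ∈ G, Extendable F t j Y) :
    #G ≤ t * #(∂ G) := by
  by_contra! hlt
  obtain ⟨p, hp⟩ := hk.exists_isTrimming hj ∅
  obtain ⟨f, hf, hfG⟩ := hT.exists_trimmed_embedding ht hp hG hlt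
  refine hF (containsCopy_of_extendable (fun e => hp.subset) (fun e he e' => hp.disjoint he) ht
    (hf.mono (coe_subset.2 (Finset.sup_le fun e he => ?_))) fun e he => ?_)
  · rw [← sdiff_empty (s := e \ p e), ← hp.sdiff_union_sup he]
    exact sdiff_subset_sdiff (subset_hverts he) Subset.rfl
  · have hmem := hfG e he (by simp)
    rw [sdiff_empty] at hmem
    simpa [hp.card_eq e he] using hext _ hmem

variable [Fintype β]

lemma card_shadow_le_pow {k : ℕ} {G : Finset (Finset β)} (hG : (G : Set (Finset β)).Sized k) :
    #(∂ G) ≤ Fintype.card β ^ (k - 1) :=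
  hG.shadow.card_le.trans (Nat.choose_le_pow _ _)

/-- The sets with more than `t` completions to a member of `F`. -/
def richSets (t : ℕ) (F : Finset (Finset β)) : Finset (Finset β) := {X | t < #(completions F X)}

lemma mem_richSets {X : Finset β} : X ∈ richSets t F ↔ t < #(completions F X) := mem_filter_univ X

lemma sized_richSets (hF : (F : Set (Finset β)).Sized r) :
    (richSets t F : Set (Finset β)).Sized (r - 1) := fun X hX => by
  obtain ⟨w, hw⟩ := card_pos.1 (Nat.zero_lt_of_lt (mem_richSets.1 (mem_coe.1 hX)))
  obtain ⟨hwX, hwF⟩ := mem_completions.1 hw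
  rw [← hF hwF, card_insert_of_notMem hwX, Nat.add_sub_cancel]

lemma extendable_one_of_mem_richSets {Y : Finset β} (hY : Y ∈ richSets t F) :
    Extendable F t 1 Y := fun B hB => by
  obtain ⟨w, hw, hwB⟩ := exists_mem_notMem_of_card_lt_card (hB.trans_lt (mem_richSets.1 hY))
  exact ⟨{w}, card_singleton w, disjoint_singleton_left.2 hwB, by
    rw [union_singleton]; exact (mem_completions.1 hw).2⟩

lemma IsRTree.card_le_pow [DecidableEq α] [Nonempty β] {k j : ℕ} {T : Finset (Finset α)}
    (hT : IsRTree r T) (hk : Reducible k T) (ht : #(hverts T) ≤ t)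
    (hF : ¬ ContainsCopy F T) (hj : j ≤ k) {G : Finset (Finset β)}
    (hG : (G : Set (Finset β)).Sized (r - j)) (hext : ∀ Y ∈ G, Extendable F t j Y) :
    #G ≤ t * Fintype.card β ^ (r - j - 1) :=
  (hT.card_le_mul_card_shadow hk ht hF hj hG hext).trans
    (Nat.mul_le_mul_left t (card_shadow_le_pow hG))

/-- The members of `F` with at least two facets outside `𝒦`. -/
def poorEdges (F 𝒦 : Finset (Finset β)) : Finset (Finset β) :=
  {e ∈ F | 1 < #{x ∈ e | e.erase x ∉ 𝒦}}

/-- The members `e ⊇ Y` of `F` all of whose facets `e \ {x}` with `x ∉ Y` are outside `𝒦`. -/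
def poorAbove (F 𝒦 : Finset (Finset β)) (Y : Finset β) : Finset (Finset β) :=
  {e ∈ F | Y ⊆ e ∧ ∀ x ∈ e \ Y, e.erase x ∉ 𝒦}

lemma mem_poorAbove {𝒦 : Finset (Finset β)} {Y e : Finset β} :
    e ∈ poorAbove F 𝒦 Y ↔ e ∈ F ∧ Y ⊆ e ∧ ∀ x ∈ e \ Y, e.erase x ∉ 𝒦 := mem_filter

lemma poorEdges_subset_biUnion (hF : (F : Set (Finset β)).Sized r) (𝒦 : Finset (Finset β)) :
    poorEdges F 𝒦 ⊆ (powersetCard (r - 2) univ).biUnion (poorAbove F 𝒦) := fun e he => by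
  obtain ⟨heF, hpoor⟩ := mem_filter.1 he
  obtain ⟨x, hx, y, hy, hxy⟩ := one_lt_card.1 hpoor
  rw [mem_filter] at hx hy
  have hpair : {x, y} ⊆ e := insert_subset hx.1 (singleton_subset_iff.2 hy.1)
  refine mem_biUnion.2 ⟨e \ {x, y}, mem_powersetCard_univ.2 ?_, mem_poorAbove.2
    ⟨heF, sdiff_subset, fun z hz => ?_⟩⟩
  · rw [card_sdiff_of_subset hpair, hF heF, card_pair hxy]
  · rw [Finset.sdiff_sdiff_eq_self hpair, mem_insert, mem_singleton] at hz
    obtain rfl | rfl := hz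
    exacts [hx.2, hy.2]

lemma card_filter_mem_poorAbove_le (hF : (F : Set (Finset β)).Sized r) {Y : Finset β}
    (hY : #Y + 2 = r) {z : β} (hz : z ∉ Y) :
    #{e ∈ poorAbove F (richSets t F) Y | z ∈ e} ≤ t := by
  have hedge : ∀ e ∈ poorAbove F (richSets t F) Y, z ∈ e →
      insert z Y ∉ richSets t F ∧ ∃ w ∈ completions F (insert z Y), insert w (insert z Y) = e := by
    intro e he hze
    obtain ⟨heF, hYe, hpoor⟩ := mem_poorAbove.1 he
    have hsub : insert z Y ⊆ e := insert_subset hze hYe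
    obtain ⟨w, hw, hwe⟩ : ∃ w, w ∉ insert z Y ∧ insert w (insert z Y) = e := by
      have hcard : #e = #(insert z Y) + 1 := by rw [hF heF, card_insert_of_notMem hz, ← hY]
      exact exists_eq_insert_iff.2 ⟨hsub, hcard.symm⟩
    subst hwe
    refine ⟨?_, w, mem_completions.2 ⟨hw, heF⟩, rfl⟩
    have hwY : w ∉ Y := fun h => hw (mem_insert_of_mem h)
    simpa only [erase_insert hw] using hpoor w (mem_sdiff.2 ⟨mem_insert_self _ _, hwY⟩)
  by_contra! hlt
  obtain ⟨e, he⟩ := card_pos.1 (Nat.zero_lt_of_lt hlt)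
  refine (hedge e (mem_filter.1 he).1 (mem_filter.1 he).2).1 (mem_richSets.2 (hlt.trans_le ?_))
  refine le_trans (card_le_card fun e he => mem_image.2 ?_)
    (card_image_le (f := (insert · (insert z Y))))
  exact (hedge e (mem_filter.1 he).1 (mem_filter.1 he).2).2

lemma card_poorAbove_le (hF : (F : Set (Finset β)).Sized r) {Y B : Finset β} (hY : #Y + 2 = r)
    (hB : ∀ e ∈ poorAbove F (richSets t F) Y, ¬ Disjoint (e \ Y) B) :
    #(poorAbove F (richSets t F) Y) ≤ #B * t := by
  have hcover : poorAbove F (richSets t F) Y ⊆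
      (B \ Y).biUnion fun z => {e ∈ poorAbove F (richSets t F) Y | z ∈ e} := fun e he => by
    obtain ⟨z, hz, hzB⟩ := not_disjoint_iff.1 (hB e he)
    obtain ⟨hze, hzY⟩ := mem_sdiff.1 hz
    exact mem_biUnion.2 ⟨z, mem_sdiff.2 ⟨hzB, hzY⟩, mem_filter.2 ⟨he, hze⟩⟩
  calc #(poorAbove F (richSets t F) Y)
    _ ≤ #(B \ Y) * t := (card_le_card hcover).trans <| card_biUnion_le_card_mul _ _ _ fun z hz =>
        card_filter_mem_poorAbove_le hF hY (mem_sdiff.1 hz).2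
    _ ≤ #B * t := Nat.mul_le_mul_right t (card_le_card sdiff_subset)

lemma card_poorAbove_le_card_mul (hF : (F : Set (Finset β)).Sized r) {Y : Finset β}
    (hY : #Y + 2 = r) : #(poorAbove F (richSets t F) Y) ≤ Fintype.card β * t :=
  card_poorAbove_le (B := univ) hF hY fun e he hdisj => by
    have hsub := sdiff_eq_empty_iff_subset.1 (disjoint_self_iff_empty _ |>.1
      (hdisj.mono_right (subset_univ (e \ Y))))
    have := card_le_card hsub
    have := hF (mem_poorAbove.1 he).1
    omega

lemma card_poorAbove_le_of_not_extendable (hF : (F : Set (Finset β)).Sized r) {Y : Finset β}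
    (hY : #Y + 2 = r) (hext : ¬ Extendable F t 2 Y) :
    #(poorAbove F (richSets t F) Y) ≤ t * t := by
  simp only [Extendable, not_forall, not_exists, not_and] at hext
  obtain ⟨B, hBt, hB⟩ := hext
  refine (card_poorAbove_le hF hY fun e he hdisj => ?_).trans (Nat.mul_le_mul_right t hBt)
  obtain ⟨heF, hYe, -⟩ := mem_poorAbove.1 he
  refine hB (e \ Y) ?_ hdisj (by rwa [union_sdiff_of_subset hYe])
  rw [card_sdiff_of_subset hYe, hF heF, ← hY, Nat.add_sub_cancel_left]

lemma card_poorEdges_le (hF : (F : Set (Finset β)).Sized r) (hr : 2 ≤ r) :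
    #(poorEdges F (richSets t F)) ≤
      #{Y ∈ powersetCard (r - 2) univ | Extendable F t 2 Y} * (Fintype.card β * t) +
        Fintype.card β ^ (r - 2) * (t * t) := by
  set 𝒴 : Finset (Finset β) := powersetCard (r - 2) univ with h𝒴
  have hY : ∀ Y ∈ 𝒴, #Y + 2 = r := fun Y hY => by
    rw [mem_powersetCard_univ.1 hY, Nat.sub_add_cancel hr]
  have hcard : #𝒴 ≤ Fintype.card β ^ (r - 2) := by
    rw [h𝒴, card_powersetCard, card_univ]
    exact Nat.choose_le_pow _ _
  calc #(poorEdges F (richSets t F))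
    _ ≤ ∑ Y ∈ 𝒴, #(poorAbove F (richSets t F) Y) :=
        (card_le_card (poorEdges_subset_biUnion hF _)).trans card_biUnion_le
    _ = ∑ Y ∈ 𝒴 with Extendable F t 2 Y, #(poorAbove F (richSets t F) Y) +
          ∑ Y ∈ 𝒴 with ¬ Extendable F t 2 Y, #(poorAbove F (richSets t F) Y) :=
        (sum_filter_add_sum_filter_not _ _ _).symm
    _ ≤ #{Y ∈ 𝒴 | Extendable F t 2 Y} * (Fintype.card β * t) +
          #{Y ∈ 𝒴 | ¬ Extendable F t 2 Y} * (t * t) := by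
        refine add_le_add (sum_le_card_nsmul _ _ _ fun Y h => ?_)
          (sum_le_card_nsmul _ _ _ fun Y h => ?_)
        · exact card_poorAbove_le_card_mul hF (hY Y (mem_filter.1 h).1)
        · exact card_poorAbove_le_of_not_extendable hF (hY Y (mem_filter.1 h).1) (mem_filter.1 h).2
    _ ≤ _ := Nat.add_le_add_left
        (Nat.mul_le_mul_right _ ((card_le_card (filter_subset _ _)).trans hcard)) _

lemma IsRTree.card_poorEdges_le [Nonempty β] [DecidableEq α] {T : Finset (Finset α)}
    (hT : IsRTree r T) (hk : Reducible 2 T) (ht : #(hverts T) ≤ t) (hr : 3 ≤ r)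
    (hF : (F : Set (Finset β)).Sized r) (hFT : ¬ ContainsCopy F T) :
    #(poorEdges F (richSets t F)) ≤ 2 * (t * t) * Fintype.card β ^ (r - 2) := by
  have hext := hT.card_le_pow hk ht hFT le_rfl
    (G := {Y ∈ powersetCard (r - 2) univ | Extendable F t 2 Y})
    (fun Y hY => mem_powersetCard_univ.1 (mem_filter.1 hY).1) fun Y hY => (mem_filter.1 hY).2
  obtain ⟨b, rfl⟩ := Nat.exists_eq_add_of_le' hr
  calc _ ≤ _ := _root_.card_poorEdges_le hF (by omega)
    _ ≤ t * Fintype.card β ^ b * (Fintype.card β * t) + Fintype.card β ^ (b + 1) * (t * t) :=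
        Nat.add_le_add_right (Nat.mul_le_mul_right _ hext) _
    _ = 2 * (t * t) * Fintype.card β ^ (b + 1) := by ring

end TreeFree

section CommonLink

variable {n : ℕ} {F 𝒦 : Finset (Finset (Fin n))} {A : Finset (Fin n)}

lemma mem_commonLink {D : Finset (Fin n)} :
    D ∈ commonLink F A ↔ Disjoint D A ∧ ∀ a ∈ A, insert a D ∈ F := mem_filter_univ D

lemma sized_commonLink {k : ℕ} (hF : (F : Set (Finset (Fin n))).Sized k) (hA : A.Nonempty) :
    (commonLink F A : Set (Finset (Fin n))).Sized (k - 1) := fun D hD => by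
  obtain ⟨hdisj, hins⟩ := mem_commonLink.1 (mem_coe.1 hD)
  obtain ⟨a, ha⟩ := hA
  rw [← hF (hins a ha), card_insert_of_notMem (disjoint_right.1 hdisj ha), Nat.add_sub_cancel]

variable [DecidableEq α]

lemma exists_injOn_insert_mem_of_image_mem_commonLink {H : Finset (Finset α)}
    {q : Finset α → Finset α} {S : Finset α} (hqS : ∀ e ∈ H, Disjoint (q e) S) {f : α → Fin n}
    (hf : Set.InjOn f ↑(H.sup q)) (hlink : ∀ e ∈ H, (q e).image f ∈ commonLink 𝒦 A)
    (hSA : #S ≤ #A) :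
    ∃ f' : α → Fin n, Set.InjOn f' ↑(H.sup q ∪ S) ∧
      ∀ e ∈ H, ∀ x ∈ S, (insert x (q e)).image f' ∈ 𝒦 := by
  have hdisj : Disjoint A ((H.sup q).image f) := disjoint_right.2 fun y hy => by
    obtain ⟨x, hx, rfl⟩ := mem_image.1 hy
    obtain ⟨e, he, hxe⟩ := mem_sup.1 hx
    exact disjoint_left.1 (mem_commonLink.1 (hlink e he)).1 (mem_image_of_mem f hxe)
  obtain ⟨f', heq, hinj, hmaps⟩ :=
    exists_injOn_extension hf (Finset.disjoint_sup_left.2 hqS) hdisj hSA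
  refine ⟨f', hinj, fun e he x hx => ?_⟩
  rw [image_insert, image_congr (heq.mono (coe_subset.2 (le_sup he)))]
  exact (mem_commonLink.1 (hlink e he)).2 _ (hmaps hx)

variable {r k t i : ℕ} {T H : Finset (Finset α)} {S : Finset α}

lemma IsRTree.card_commonLink_le_mul_card_shadow (hT : IsRTree r T) (hk : Reducible k T)
    (ht : #(hverts T) ≤ t) (hHT : H ⊆ T) (hS : IsCrossCut H S) (hF : ¬ ContainsCopy F H)
    (hA : A.Nonempty) (hSA : #S ≤ #A) (hi : i + 1 ≤ k)
    (h𝒦 : (𝒦 : Set (Finset (Fin n))).Sized (r - i)) (hext : ∀ X ∈ 𝒦, Extendable F t i X) :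
    #(commonLink 𝒦 A) ≤ t * #(∂ (commonLink 𝒦 A)) := by
  by_contra! hlt
  have : Nonempty (Fin n) := hA.to_type
  obtain ⟨p, hp⟩ := hk.exists_isTrimming hi S
  obtain ⟨f, hf, hfG⟩ := hT.exists_trimmed_embedding ht hp (sized_commonLink h𝒦 hA) hlt
  have hfH : Set.InjOn f ↑(H.sup fun e => (e \ p e) \ S) := hf.mono <| coe_subset.2 <|
    Finset.sup_le fun e he => by
      rw [← hp.sdiff_union_sup (hHT he)]
      exact sdiff_subset_sdiff (subset_hverts (hHT he)) Subset.rfl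
  obtain ⟨f', hinj, h𝒦f'⟩ := exists_injOn_insert_mem_of_image_mem_commonLink
    (fun e _ => sdiff_disjoint) hfH (fun e he => hfG e (hHT he) (by rw [hS e he]; omega)) hSA
  refine hF (containsCopy_of_extendable (fun e he => hp.subset (hHT he))
    (fun e he e' he' => hp.disjoint (hHT he) (hHT he'))
    ((card_le_card (sup_mono hHT)).trans ht)
    (hinj.mono (coe_subset.2 (Finset.sup_le fun e he => ?_))) fun e he => ?_)
  · exact fun x hx => (em (x ∈ S)).elim (mem_union_right _) fun hxS =>
      mem_union_left _ (mem_sup.2 ⟨e, he, mem_sdiff.2 ⟨hx, hxS⟩⟩)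
  · obtain ⟨x, hx⟩ := card_eq_one.1 (hS e he)
    have hxS : x ∈ S := (mem_inter.1 (hx ▸ mem_singleton_self x)).2
    have hsplit : e \ p e = insert x ((e \ p e) \ S) := by
      rw [insert_eq, ← hx, ← hp.sdiff_inter (hHT he), union_comm, sdiff_union_inter]
    rw [hp.card_eq e (hHT he), hS e he, Nat.add_sub_cancel, hsplit]
    exact hext _ (h𝒦f' e he x hxS)

lemma IsRTree.card_commonLink_le_pow (hT : IsRTree r T) (hk : Reducible k T)
    (ht : #(hverts T) ≤ t) (hHT : H ⊆ T) (hS : IsCrossCut H S) (hF : ¬ ContainsCopy F H)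
    (hA : A.Nonempty) (hSA : #S ≤ #A) (hi : i + 1 ≤ k)
    (h𝒦 : (𝒦 : Set (Finset (Fin n))).Sized (r - i)) (hext : ∀ X ∈ 𝒦, Extendable F t i X) :
    #(commonLink 𝒦 A) ≤ t * n ^ (r - i - 2) := by
  refine (hT.card_commonLink_le_mul_card_shadow hk ht hHT hS hF hA hSA hi h𝒦 hext).trans
    (Nat.mul_le_mul_left t ?_)
  simpa [Nat.sub_sub] using card_shadow_le_pow (sized_commonLink h𝒦 hA)

end CommonLink

/-! ### Kruskal–Katona for large families -/

section KruskalKatona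

lemma sub_le_choose_succ (m k : ℕ) : m - k ≤ m.choose (k + 1) := by
  induction m with
  | zero => simp
  | succ m ih =>
    obtain hmk | hkm := lt_or_ge m k
    · rw [Nat.sub_eq_zero_of_le hmk]
      exact Nat.zero_le _
    · rw [Nat.choose_succ_succ']
      have := Nat.choose_pos hkm
      omega

lemma exists_choose_le_lt_choose (N k : ℕ) :
    ∃ m, m.choose (k + 1) ≤ N ∧ N < (m + 1).choose (k + 1) := by
  have hex : ∃ m, N < (m + 1).choose (k + 1) := by
    refine ⟨N + k, ?_⟩
    have := sub_le_choose_succ (N + k + 1) k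
    omega
  refine ⟨Nat.find hex, ?_, Nat.find_spec hex⟩
  obtain hzero | ⟨m, hm⟩ : Nat.find hex = 0 ∨ ∃ m, Nat.find hex = m + 1 :=
    (Nat.find hex).eq_zero_or_pos.imp_right fun h => ⟨_, (Nat.succ_pred_eq_of_pos h).symm⟩
  · simp [hzero]
  · rw [hm]
    exact not_lt.1 (Nat.find_min hex (hm ▸ Nat.lt_succ_self m))

lemma add_choose_succ_le (m d k : ℕ) :
    (m + d).choose (k + 1) ≤ m.choose (k + 1) + d * (m + d).choose k := by
  induction d with
  | zero => simp
  | succ d ih =>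
    have hmono : (m + d).choose k ≤ (m + (d + 1)).choose k := Nat.choose_le_choose k (by omega)
    calc (m + (d + 1)).choose (k + 1)
      _ = (m + d).choose k + (m + d).choose (k + 1) := Nat.choose_succ_succ' _ _
      _ ≤ (m + (d + 1)).choose k + (m.choose (k + 1) + d * (m + (d + 1)).choose k) := by
          gcongr
          exact ih.trans (by gcongr)
      _ = m.choose (k + 1) + (d + 1) * (m + (d + 1)).choose k := by ring

lemma succ_mul_choose_succ_add (n k : ℕ) :
    (k + 1) * n.choose (k + 1) + k * n.choose k = n * n.choose k := by
  obtain hnk | hkn := lt_or_ge n k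
  · simp [Nat.choose_eq_zero_of_lt hnk, Nat.choose_eq_zero_of_lt (hnk.trans (Nat.lt_succ_self k))]
  · rw [mul_comm (k + 1), Nat.choose_succ_right_eq, mul_comm k, ← mul_add, Nat.sub_add_cancel hkn,
      mul_comm]

variable {n k m : ℕ} {𝒜 : Finset (Finset (Fin n))}

lemma choose_le_card_shadow (h𝒜 : (𝒜 : Set (Finset (Fin n))).Sized (k + 1)) (hkm : k + 1 ≤ m)
    (hm : m.choose (k + 1) ≤ #𝒜) : m.choose k ≤ #(∂ 𝒜) := by
  have hmn : m ≤ n := by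
    by_contra! hnm
    have hle : (n + 1).choose (k + 1) ≤ n.choose (k + 1) :=
      (Nat.choose_le_choose _ hnm).trans (hm.trans (by simpa using h𝒜.card_le))
    rw [Nat.choose_succ_succ', add_le_iff_nonpos_left, nonpos_iff_eq_zero,
      Nat.choose_eq_zero_iff] at hle
    have hpos : 0 < n.choose (k + 1) :=
      (Nat.choose_pos hkm).trans_le (hm.trans (by simpa using h𝒜.card_le))
    rw [Nat.choose_eq_zero_of_lt (by omega)] at hpos
    exact hpos.false
  simpa using kruskal_katona_lovasz_form (i := 1) (by omega) hkm hmn h𝒜 hm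

lemma succ_mul_card_le_mul_card_shadow (h𝒜 : (𝒜 : Set (Finset (Fin n))).Sized (k + 1))
    (hlt : #𝒜 < m.choose (k + 1)) : (k + 1) * #𝒜 ≤ m * #(∂ 𝒜) := by
  obtain h0 | hpos := Nat.eq_zero_or_pos #𝒜
  · simp [h0]
  obtain ⟨i, hi, hi'⟩ := exists_choose_le_lt_choose #𝒜 k
  have him : i + 1 ≤ m := by
    by_contra! h
    exact hlt.not_ge ((Nat.choose_le_choose _ (Nat.lt_succ_iff.1 h)).trans hi)
  have hki : k + 1 ≤ i := by
    by_contra! h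
    exact absurd (hi'.trans_le (Nat.choose_le_choose _ (Nat.succ_le_of_lt h)))
      (by rw [Nat.choose_self]; omega)
  calc (k + 1) * #𝒜
    _ ≤ (k + 1) * (i + 1).choose (k + 1) := Nat.mul_le_mul_left _ hi'.le
    _ = (i + 1) * i.choose k := by rw [Nat.add_one_mul_choose_eq, mul_comm]
    _ ≤ m * #(∂ 𝒜) := Nat.mul_le_mul him (choose_le_card_shadow h𝒜 hki hi)

-- By Kruskal–Katona every class has `#(∂ 𝒢) / #𝒢` at least the ratio for a class of maximal size.
lemma exists_choose_le_card_of_sum_card_shadow_le {ι : Type*} {s : Finset ι} (hs : s.Nonempty)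
    {𝒢 : ι → Finset (Finset (Fin n))}
    (h𝒢 : ∀ i ∈ s, (𝒢 i : Set (Finset (Fin n))).Sized (k + 1)) {ε δ : ℕ}
    (hsum : n.choose (k + 1) ≤ ε + ∑ i ∈ s, #(𝒢 i))
    (hshadow : ∑ i ∈ s, #(∂ (𝒢 i)) ≤ n.choose k + δ) :
    ∃ i ∈ s, n.choose (k + 1) ≤ #(𝒢 i) + (k + 1) * (ε + n.choose k) + (n + 1) * δ := by
  obtain ⟨i, hi, hmax⟩ := exists_max_image s (fun i => #(𝒢 i)) hs
  refine ⟨i, hi, ?_⟩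
  obtain ⟨m, hm, hm'⟩ := exists_choose_le_lt_choose #(𝒢 i) k
  obtain hnm | hmn := le_total n m
  · have := (Nat.choose_le_choose (k + 1) hnm).trans hm
    omega
  obtain ⟨d, rfl⟩ := Nat.exists_eq_add_of_le hmn
  have hcount : (k + 1) * (m + d).choose (k + 1) ≤
      (k + 1) * ε + (m + 1) * (m + d).choose k + (m + d + 1) * δ :=
    calc (k + 1) * (m + d).choose (k + 1)
      _ ≤ (k + 1) * ε + ∑ j ∈ s, (k + 1) * #(𝒢 j) := by
          rw [← mul_sum, ← mul_add]
          exact Nat.mul_le_mul_left _ hsum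
      _ ≤ (k + 1) * ε + ∑ j ∈ s, (m + 1) * #(∂ (𝒢 j)) := by
          refine Nat.add_le_add_left (sum_le_sum fun j hj => ?_) _
          exact succ_mul_card_le_mul_card_shadow (h𝒢 j hj) ((hmax j hj).trans_lt hm')
      _ ≤ (k + 1) * ε + (m + 1) * ((m + d).choose k + δ) := by
          rw [← mul_sum]
          gcongr
      _ ≤ (k + 1) * ε + (m + 1) * (m + d).choose k + (m + d + 1) * δ := by
          rw [mul_add, ← add_assoc]
          gcongr
  have hgrowth := add_choose_succ_le m d k
  have hid := succ_mul_choose_succ_add (m + d) k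
  linarith

end KruskalKatona

/-! ### Counting the members of several families -/

section MemberIndices

variable {ι γ : Type*} [DecidableEq γ] {𝒱 : ι → Finset γ} {W U : Finset ι}
  {𝒟 : Finset γ}

/-- The indices `x ∈ W` of the families `𝒱 x` that contain `D`. -/
def memberIndices (𝒱 : ι → Finset γ) (W : Finset ι) (D : γ) : Finset ι := {x ∈ W | D ∈ 𝒱 x}

lemma mem_memberIndices {D : γ} {x : ι} : x ∈ memberIndices 𝒱 W D ↔ x ∈ W ∧ D ∈ 𝒱 x := mem_filter

lemma memberIndices_subset (D : γ) : memberIndices 𝒱 W D ⊆ W := filter_subset _ _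

lemma sum_card_eq_sum_card_memberIndices (h𝒱 : ∀ x ∈ W, 𝒱 x ⊆ 𝒟) :
    ∑ x ∈ W, #(𝒱 x) = ∑ D ∈ 𝒟, #(memberIndices 𝒱 W D) := by
  refine Eq.trans (sum_congr rfl fun x hx => ?_)
    (sum_card_bipartiteAbove_eq_sum_card_bipartiteBelow fun x D => D ∈ 𝒱 x)
  rw [bipartiteAbove, filter_mem_eq_inter, inter_eq_right.2 (h𝒱 x hx)]

lemma add_ite_ne_le_add_two_mul_choose (m τ : ℕ) :
    m + (if m ≠ τ then 1 else 0) ≤ τ + 2 * m.choose (τ + 1) := by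
  have := sub_le_choose_succ m τ
  split_ifs <;> omega

lemma choose_le_one_add_succ_mul_choose_succ (m τ : ℕ) :
    m.choose τ ≤ 1 + (τ + 1) * m.choose (τ + 1) := by
  obtain hlt | rfl | hgt := lt_trichotomy m τ
  · simp [Nat.choose_eq_zero_of_lt hlt]
  · simp
  · have hle : m.choose τ * 1 ≤ m.choose τ * (m - τ) := Nat.mul_le_mul_left _ (by omega)
    rw [← Nat.choose_succ_right_eq] at hle
    linarith

lemma sum_card_add_card_filter_ne_le (h𝒱 : ∀ x ∈ W, 𝒱 x ⊆ 𝒟) (τ : ℕ) :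
    ∑ x ∈ W, #(𝒱 x) + #{D ∈ 𝒟 | #(memberIndices 𝒱 W D) ≠ τ} ≤
      τ * #𝒟 + 2 * ∑ D ∈ 𝒟, (#(memberIndices 𝒱 W D)).choose (τ + 1) := by
  rw [sum_card_eq_sum_card_memberIndices h𝒱, card_filter, ← sum_add_distrib, mul_sum,
    mul_comm τ, ← smul_eq_mul #𝒟, ← sum_const, ← sum_add_distrib]
  exact sum_le_sum fun D _ => add_ite_ne_le_add_two_mul_choose _ _

variable [DecidableEq ι]

lemma sum_choose_card_memberIndices (hWU : W ⊆ U) (𝒱 : ι → Finset γ) (𝒟 : Finset γ) (j : ℕ) :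
    ∑ D ∈ 𝒟, (#(memberIndices 𝒱 W D)).choose j =
      ∑ A ∈ powersetCard j U, #{D ∈ 𝒟 | A ⊆ memberIndices 𝒱 W D} := by
  refine Eq.trans (sum_congr rfl fun D _ => ?_)
    (sum_card_bipartiteAbove_eq_sum_card_bipartiteBelow fun D A => A ⊆ memberIndices 𝒱 W D)
  rw [← card_powersetCard]
  congr 1
  ext A
  simp only [mem_powersetCard, mem_bipartiteAbove]
  exact ⟨fun h => ⟨⟨h.1.trans ((memberIndices_subset D).trans hWU), h.2⟩, h.1⟩,
    fun h => ⟨h.2, h.1.2⟩⟩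

lemma sum_choose_card_memberIndices_le {j l : ℕ}
    (h : ∀ A ∈ powersetCard j W, #{D ∈ 𝒟 | A ⊆ memberIndices 𝒱 W D} ≤ l) :
    ∑ D ∈ 𝒟, (#(memberIndices 𝒱 W D)).choose j ≤ #W ^ j * l := by
  rw [sum_choose_card_memberIndices Subset.rfl]
  refine (sum_le_card_nsmul _ _ l h).trans ?_
  rw [card_powersetCard, smul_eq_mul]
  exact Nat.mul_le_mul_right l (Nat.choose_le_pow _ _)

lemma card_eq_card_filter_ne_add_sum (hWU : W ⊆ U) (𝒱 : ι → Finset γ) (𝒟 : Finset γ) (τ : ℕ) :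
    #𝒟 = #{D ∈ 𝒟 | #(memberIndices 𝒱 W D) ≠ τ} +
      ∑ A ∈ powersetCard τ U, #{D ∈ 𝒟 | memberIndices 𝒱 W D = A} := by
  rw [← card_filter_add_card_filter_not (s := 𝒟) fun D => #(memberIndices 𝒱 W D) ≠ τ]
  congr 1
  rw [card_eq_sum_card_fiberwise (f := memberIndices 𝒱 W) (t := powersetCard τ U) fun D hD => ?_]
  · refine sum_congr rfl fun A hA => ?_
    rw [filter_filter]
    refine congrArg card (filter_congr fun D _ => and_iff_right_of_imp ?_)
    rintro rfl
    exact not_not.2 (mem_powersetCard.1 hA).2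
  · exact mem_coe.2 (mem_powersetCard.2 ⟨(memberIndices_subset D).trans hWU,
      not_not.1 (mem_filter.1 (mem_coe.1 hD)).2⟩)

lemma sum_card_filter_subset_le (hWU : W ⊆ U) (𝒱 : ι → Finset γ) (𝒟 : Finset γ) (τ : ℕ) :
    ∑ A ∈ powersetCard τ U, #{D ∈ 𝒟 | A ⊆ memberIndices 𝒱 W D} ≤
      #𝒟 + (τ + 1) * ∑ D ∈ 𝒟, (#(memberIndices 𝒱 W D)).choose (τ + 1) := by
  rw [← sum_choose_card_memberIndices hWU, card_eq_sum_ones, mul_sum, ← sum_add_distrib]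
  exact sum_le_sum fun D _ => choose_le_one_add_succ_mul_choose_succ _ _

end MemberIndices

/-! ### Centred links and hubs -/

section CentredLink

variable [DecidableEq β] {F 𝒦 : Finset (Finset β)} {k : ℕ}

/-- The part of the link of `x` in `F` consisting of the `X` for which all facets of
`insert x X` that contain `x` lie in `𝒦`; every member of `F` that is not in `poorEdges F 𝒦`
is counted in it for some `x`. -/
def centredLink (F 𝒦 : Finset (Finset β)) (x : β) : Finset (Finset β) :=
  {X ∈ F.memberSubfamily x | ∀ y ∈ X, insert x (X.erase y) ∈ 𝒦}

lemma centredLink_subset (x : β) : centredLink F 𝒦 x ⊆ F.memberSubfamily x := filter_subset _ _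

lemma shadow_centredLink_subset (x : β) : ∂ (centredLink F 𝒦 x) ⊆ 𝒦.memberSubfamily x :=
  fun Y hY => by
    obtain ⟨y, hy, hyY⟩ := mem_shadow_iff_insert_mem.1 hY
    obtain ⟨hmem, h𝒦⟩ := mem_filter.1 hyY
    refine mem_memberSubfamily.2
      ⟨?_, fun hx => (mem_memberSubfamily.1 hmem).2 (mem_insert_of_mem hx)⟩
    simpa only [erase_insert hy] using h𝒦 y (mem_insert_self y Y)

lemma sized_memberSubfamily (hF : (F : Set (Finset β)).Sized (k + 1)) (x : β) :
    (F.memberSubfamily x : Set (Finset β)).Sized k := fun X hX => by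
  obtain ⟨hins, hx⟩ := mem_memberSubfamily.1 (mem_coe.1 hX)
  exact Nat.succ_injective ((card_insert_of_notMem hx).symm.trans (hF hins))

lemma exists_erase_mem_centredLink {e : Finset β} (he : e ∈ F) (hne : e.Nonempty)
    (hpoor : e ∉ poorEdges F 𝒦) : ∃ x ∈ e, e.erase x ∈ centredLink F 𝒦 x := by
  have hle : #{x ∈ e | e.erase x ∉ 𝒦} ≤ 1 := not_lt.1 fun h => hpoor (mem_filter.2 ⟨he, h⟩)
  obtain ⟨x, hx, hx𝒦⟩ : ∃ x ∈ e, ∀ y ∈ e, y ≠ x → e.erase y ∈ 𝒦 := by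
    obtain ⟨x, hx, hx𝒦⟩ | h := em (∃ x ∈ e, e.erase x ∉ 𝒦)
    · refine ⟨x, hx, fun y hy hyx => by_contra fun hy𝒦 => hyx ?_⟩
      exact card_le_one.1 hle y (mem_filter.2 ⟨hy, hy𝒦⟩) x (mem_filter.2 ⟨hx, hx𝒦⟩)
    · push Not at h
      exact hne.imp fun x hx => ⟨hx, fun y hy _ => h y hy⟩
  refine ⟨x, hx, mem_filter.2 ⟨mem_memberSubfamily.2 ⟨by rwa [insert_erase hx], notMem_erase x e⟩,
    fun y hy => ?_⟩⟩
  obtain ⟨hyx, hye⟩ := mem_erase.1 hy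
  rw [erase_right_comm, insert_erase (mem_erase.2 ⟨hyx.symm, hx⟩)]
  exact hx𝒦 y hye hyx

variable [Fintype β]

lemma sum_card_memberSubfamily (hF : (F : Set (Finset β)).Sized k) :
    ∑ x, #(F.memberSubfamily x) = k * #F := by
  calc ∑ x, #(F.memberSubfamily x)
    _ = ∑ x, #{e ∈ F | x ∈ e} := sum_congr rfl fun x _ =>
        card_image_of_injOn ((erase_injOn' x).mono fun e he => (mem_filter.1 he).2)
    _ = ∑ e ∈ F, #e := by
        simpa only [bipartiteAbove, bipartiteBelow, filter_univ_mem] using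
          sum_card_bipartiteAbove_eq_sum_card_bipartiteBelow (s := univ) (t := F)
            fun (x : β) e => x ∈ e
    _ = k * #F := by rw [sum_const_nat fun e he => hF he, mul_comm]

lemma card_le_card_poorEdges_add (hF : ∀ e ∈ F, e.Nonempty) :
    #F ≤ #(poorEdges F 𝒦) + ∑ x, #(centredLink F 𝒦 x) := by
  have hcover : F ⊆ poorEdges F 𝒦 ∪ univ.biUnion fun x => (centredLink F 𝒦 x).image (insert x) :=
    fun e he => mem_union.2 <| or_iff_not_imp_left.2 fun hpoor => by
      obtain ⟨x, hx, hxe⟩ := exists_erase_mem_centredLink he (hF e he) hpoor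
      exact mem_biUnion.2 ⟨x, mem_univ x, mem_image.2 ⟨_, hxe, insert_erase hx⟩⟩
  refine (card_le_card hcover).trans ((card_union_le _ _).trans ?_)
  exact Nat.add_le_add_left (card_biUnion_le.trans (sum_le_sum fun x _ => card_image_le)) _

end CentredLink

section Hubs

variable {n b τ : ℕ} {F 𝒦 : Finset (Finset (Fin n))}

-- The hubs are the vertices with a centred link of size at least `k.choose (b + 1)`; by
-- Kruskal–Katona each of them lies in at least `k.choose b` members of `𝒦`.
lemma exists_hubs {k : ℕ} (hF : (F : Set (Finset (Fin n))).Sized (b + 2))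
    (h𝒦 : (𝒦 : Set (Finset (Fin n))).Sized (b + 1)) (hk : b + 1 ≤ k) :
    ∃ W : Finset (Fin n), #W * k.choose b ≤ (b + 1) * #𝒦 ∧
      #F ≤ #(poorEdges F 𝒦) + k * #𝒦 + ∑ x ∈ W, #(centredLink F 𝒦 x) := by
  have hsized (x : Fin n) : (centredLink F 𝒦 x : Set (Finset (Fin n))).Sized (b + 1) :=
    (sized_memberSubfamily hF x).mono (coe_subset.2 (centredLink_subset x))
  have hshadow (x : Fin n) : #(∂ (centredLink F 𝒦 x)) ≤ #(𝒦.memberSubfamily x) :=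
    card_le_card (shadow_centredLink_subset x)
  refine ⟨({x | k.choose (b + 1) ≤ #(centredLink F 𝒦 x)} : Finset (Fin n)), ?_, ?_⟩
  · rw [← sum_card_memberSubfamily h𝒦, ← smul_eq_mul, ← sum_const]
    refine (sum_le_sum fun x hx => ?_).trans (sum_le_sum_of_subset (subset_univ _))
    exact (choose_le_card_shadow (hsized x) hk (mem_filter.1 hx).2).trans (hshadow x)
  · have hlight : (b + 1) * ∑ x with ¬ k.choose (b + 1) ≤ #(centredLink F 𝒦 x),
        #(centredLink F 𝒦 x) ≤ (b + 1) * (k * #𝒦) := by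
      rw [mul_left_comm, ← sum_card_memberSubfamily h𝒦, mul_sum, mul_sum]
      refine (sum_le_sum fun x hx => ?_).trans (sum_le_sum_of_subset (subset_univ _))
      exact (succ_mul_card_le_mul_card_shadow (hsized x) (not_le.1 (mem_filter.1 hx).2)).trans
        (Nat.mul_le_mul_left k (hshadow x))
    have hcard := card_le_card_poorEdges_add (F := F) (𝒦 := 𝒦) fun e he =>
      card_pos.1 (by rw [hF he]; omega)
    rw [← sum_filter_add_sum_filter_not univ fun x => k.choose (b + 1) ≤ #(centredLink F 𝒦 x)]
      at hcard
    have := Nat.le_of_mul_le_mul_left hlight (Nat.succ_pos b)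
    omega

lemma filter_subset_memberIndices_subset_commonLink {𝒱 : Fin n → Finset (Finset (Fin n))}
    (h𝒱 : ∀ x, 𝒱 x ⊆ F.memberSubfamily x) (W A : Finset (Fin n)) (𝒟 : Finset (Finset (Fin n))) :
    {D ∈ 𝒟 | A ⊆ memberIndices 𝒱 W D} ⊆ commonLink F A := fun D hD => by
  have hmem : ∀ a ∈ A, insert a D ∈ F ∧ a ∉ D := fun a ha =>
    mem_memberSubfamily.1 (h𝒱 a (mem_memberIndices.1 ((mem_filter.1 hD).2 ha)).2)
  exact mem_commonLink.2 ⟨disjoint_right.2 fun a ha => (hmem a ha).2, fun a ha => (hmem a ha).1⟩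

lemma shadow_filter_memberIndices_eq_subset (W A : Finset (Fin n)) :
    ∂ (filter (fun D => memberIndices (centredLink F 𝒦) W D = A) (powersetCard (b + 1) univ)) ⊆
      filter (fun Y => A ⊆ memberIndices (memberSubfamily · 𝒦) W Y) (powersetCard b univ) :=
  fun Y hY => by
    obtain ⟨y, hy, hyY⟩ := mem_shadow_iff_insert_mem.1 hY
    obtain ⟨hcard, hA⟩ := mem_filter.1 hyY
    rw [mem_powersetCard_univ, card_insert_of_notMem hy, Nat.add_right_cancel_iff] at hcard
    refine mem_filter.2 ⟨mem_powersetCard_univ.2 hcard, fun x hx => ?_⟩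
    obtain ⟨hxW, hxy⟩ := mem_memberIndices.1 (hA ▸ hx)
    refine mem_memberIndices.2 ⟨hxW, shadow_centredLink_subset (F := F) x ?_⟩
    exact mem_shadow_iff_insert_mem.2 ⟨y, hy, hxy⟩

lemma sum_choose_card_memberIndices_le_of_card_commonLink_le
    {𝒱 : Fin n → Finset (Finset (Fin n))} (h𝒱 : ∀ x, 𝒱 x ⊆ F.memberSubfamily x) {l : ℕ}
    (hlink : ∀ A, #A = τ + 1 → #(commonLink F A) ≤ l) (W : Finset (Fin n))
    (𝒟 : Finset (Finset (Fin n))) :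
    ∑ D ∈ 𝒟, (#(memberIndices 𝒱 W D)).choose (τ + 1) ≤ #W ^ (τ + 1) * l :=
  sum_choose_card_memberIndices_le fun A hA =>
    (card_le_card (filter_subset_memberIndices_subset_commonLink h𝒱 W A 𝒟)).trans
      (hlink A (mem_powersetCard.1 hA).2)

lemma sum_card_shadow_filter_memberIndices_eq_le {l : ℕ}
    (hlink𝒦 : ∀ A, #A = τ + 1 → #(commonLink 𝒦 A) ≤ l) (W : Finset (Fin n)) :
    ∑ A ∈ powersetCard τ univ,
      #(∂ (filter (fun D => memberIndices (centredLink F 𝒦) W D = A) (powersetCard (b + 1) univ)))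
      ≤ n.choose b + (τ + 1) * (#W ^ (τ + 1) * l) :=
  calc _ ≤ ∑ A ∈ powersetCard τ univ,
        #{Y ∈ powersetCard b univ | A ⊆ memberIndices (memberSubfamily · 𝒦) W Y} :=
      sum_le_sum fun A _ => card_le_card (shadow_filter_memberIndices_eq_subset W A)
    _ ≤ n.choose b + (τ + 1) *
        ∑ Y ∈ powersetCard b univ, (#(memberIndices (memberSubfamily · 𝒦) W Y)).choose (τ + 1) := by
      simpa using sum_card_filter_subset_le (subset_univ W) (memberSubfamily · 𝒦)
        (powersetCard b univ) τ
    _ ≤ n.choose b + (τ + 1) * (#W ^ (τ + 1) * l) :=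
      Nat.add_le_add_left (Nat.mul_le_mul_left _
        (sum_choose_card_memberIndices_le_of_card_commonLink_le (fun _ => Subset.rfl) hlink𝒦 W _)) _

lemma exists_choose_le_card_commonLink {k l₁ l₂ : ℕ}
    (hF : (F : Set (Finset (Fin n))).Sized (b + 2))
    (h𝒦 : (𝒦 : Set (Finset (Fin n))).Sized (b + 1)) (hk : b + 1 ≤ k) (hτ : τ ≤ n)
    (hlinkF : ∀ A, #A = τ + 1 → #(commonLink F A) ≤ l₁)
    (hlink𝒦 : ∀ A, #A = τ + 1 → #(commonLink 𝒦 A) ≤ l₂) :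
    ∃ (w ε : ℕ) (A : Finset (Fin n)), w * k.choose b ≤ (b + 1) * #𝒦 ∧ #A = τ ∧
      #F + ε ≤ τ * n.choose (b + 1) + (2 * (w ^ (τ + 1) * l₁) + #(poorEdges F 𝒦) + k * #𝒦) ∧
      n.choose (b + 1) ≤ #(commonLink F A) + (b + 1) * (ε + n.choose b) +
        (n + 1) * ((τ + 1) * (w ^ (τ + 1) * l₂)) := by
  obtain ⟨W, hW, hFW⟩ := exists_hubs hF h𝒦 hk
  set 𝒟 := powersetCard (b + 1) (univ : Finset (Fin n)) with h𝒟
  have h𝒟_card : #𝒟 = n.choose (b + 1) := by simp [h𝒟]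
  have hoverlap := sum_choose_card_memberIndices_le_of_card_commonLink_le
    (centredLink_subset (𝒦 := 𝒦)) hlinkF W 𝒟
  have hexcept := sum_card_add_card_filter_ne_le (W := W) (𝒱 := centredLink F 𝒦) (𝒟 := 𝒟)
    (fun x _ X hX => mem_powersetCard_univ.2
      (sized_memberSubfamily hF x (centredLink_subset x hX))) τ
  obtain ⟨A, hA, hlarge⟩ := exists_choose_le_card_of_sum_card_shadow_le
    (powersetCard_nonempty.2 (by simpa using hτ)) (fun A _ D hD => mem_powersetCard_univ.1
      (mem_filter.1 hD).1)
    (h𝒟_card ▸ (card_eq_card_filter_ne_add_sum (subset_univ W) (centredLink F 𝒦) 𝒟 τ).le)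
    (sum_card_shadow_filter_memberIndices_eq_le hlink𝒦 W)
  refine ⟨#W, #{D ∈ 𝒟 | #(memberIndices (centredLink F 𝒦) W D) ≠ τ}, A, hW,
    (mem_powersetCard.1 hA).2, by rw [h𝒟_card] at hexcept; omega, hlarge.trans ?_⟩
  gcongr
  exact (monotone_filter_right _ fun D _ h => h.ge).trans
    (filter_subset_memberIndices_subset_commonLink centredLink_subset W A 𝒟)

end Hubs

/-! ### Asymptotic estimates -/

section Asymptotics

open Filter

variable {b σ t k w n : ℕ} {P y : ℝ}

lemma exists_nat_mul_le_and_div_le (b t : ℕ) (hP : 8 * (t + 1) * (b + 1) ≤ P) :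
    ∃ k : ℕ, b + 1 ≤ k ∧ 4 * (t + 1) * (k : ℝ) ≤ P ∧
      P / (8 * (t + 1)) ≤ ((k + 1 - b : ℕ) : ℝ) := by
  have ht : (0 : ℝ) < 8 * (t + 1) := by positivity
  obtain ⟨x, rfl⟩ : ∃ x : ℝ, P = 8 * (t + 1) * x := ⟨_, (mul_div_cancel₀ P ht.ne').symm⟩
  have hb : (b + 1 : ℝ) ≤ x := le_of_mul_le_mul_left hP ht
  have hle : (⌊2 * x⌋₊ : ℝ) ≤ 2 * x := Nat.floor_le (by linarith)
  have hlt : 2 * x < ⌊2 * x⌋₊ + 1 := Nat.lt_floor_add_one _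
  have hk : b + 1 ≤ ⌊2 * x⌋₊ := Nat.le_floor (by push_cast; linarith)
  refine ⟨⌊2 * x⌋₊, hk, ?_, ?_⟩
  · calc 4 * (t + 1) * (⌊2 * x⌋₊ : ℝ) ≤ 4 * (t + 1) * (2 * x) := by gcongr
      _ = 8 * (t + 1) * x := by ring
  · rw [mul_div_cancel_left₀ x ht.ne', Nat.cast_sub (by omega)]
    push_cast
    linarith

/-- The constant `c` for which the number of hubs is at most `c * n ^ (β * b)`. -/
def hubConst (b t : ℕ) : ℝ := (b + 1) * t * b.factorial * (8 * (t + 1)) ^ b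

lemma le_hubConst_mul_pow (hP : 0 < P) (hk : P / (8 * (t + 1)) ≤ ((k + 1 - b : ℕ) : ℝ))
    (hw : (w * k.choose b : ℝ) ≤ (b + 1) * (t * (P * y) ^ b)) : w ≤ hubConst b t * y ^ b := by
  have hchoose : (P / (8 * (t + 1))) ^ b / b.factorial ≤ k.choose b :=
    le_trans (by gcongr) (Nat.pow_le_choose (α := ℝ) b k)
  have hle : w * ((P / (8 * (t + 1))) ^ b / b.factorial) ≤ (b + 1) * (t * (P * y) ^ b) :=
    (by gcongr : _ ≤ (w * k.choose b : ℝ)).trans hw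
  rw [div_pow, div_div, ← mul_div_assoc, div_le_iff₀ (by positivity), mul_pow] at hle
  refine le_of_mul_le_mul_right ?_ (pow_pos hP b)
  rw [hubConst]
  linarith

lemma mul_mul_pow_le (hb : 1 ≤ b) (hy : 1 ≤ y) {c d : ℝ} (hd : 0 ≤ d) (hdc : d * c ^ σ ≤ y)
    (hc : (w : ℝ) ≤ c * y ^ b) : d * (w : ℝ) ^ σ ≤ y ^ (b * (σ + 1)) := by
  have hy0 : 0 < y := by linarith
  have hcy : 0 ≤ c * y ^ b := w.cast_nonneg.trans hc
  refine le_of_mul_le_mul_right ?_ hy0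
  calc d * (w : ℝ) ^ σ * y
    _ ≤ d * (c * y ^ b) ^ σ * y ^ b := by
        gcongr
        exact le_self_pow₀ hy (Nat.one_le_iff_ne_zero.1 hb)
    _ = d * c ^ σ * y ^ (b * (σ + 1)) := by ring
    _ ≤ y ^ (b * (σ + 1)) * y := by rw [mul_comm]; gcongr

lemma excess_le (hσ : 1 ≤ σ) (hw : 8 * σ * t * (w : ℝ) ^ σ ≤ P) (ht : 8 * (t : ℝ) ^ 2 ≤ P)
    (hk : 4 * (t + 1) * (k : ℝ) ≤ P) :
    2 * ((w : ℝ) ^ σ * (t * n ^ b)) + 2 * (t * t) * n ^ b + k * (t * n ^ b) ≤ n ^ b * P := by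
  have hσw : 1 * ((t : ℝ) * w ^ σ) ≤ σ * (t * w ^ σ) := by gcongr; exact_mod_cast hσ
  have hP0 : 0 ≤ P := le_trans (by positivity) ht
  calc _ = (n : ℝ) ^ b * (2 * (t * (w : ℝ) ^ σ) + 2 * (t * t) + k * t) := by ring
    _ ≤ n ^ b * P := by gcongr; linarith

lemma shadow_excess_le (hb : 1 ≤ b) (hn : 1 ≤ n) (hw : 8 * σ * t * (w : ℝ) ^ σ ≤ P)
    (hP : 2 ≤ P) :
    ((n : ℝ) + 1) * (σ * (w ^ σ * (t * n ^ (b - 1)))) + (b + 1) * n.choose b ≤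
      (b + 1) * (n ^ b * P) := by
  have hchoose : (n.choose b : ℝ) ≤ n ^ b := by exact_mod_cast Nat.choose_le_pow n b
  have hpow : ((n : ℝ) + 1) * n ^ (b - 1) ≤ 2 * n ^ b := by
    rw [← mul_pow_sub_one (by omega : b ≠ 0) (n : ℝ), ← mul_assoc]
    gcongr
    linarith [(by exact_mod_cast hn : (1 : ℝ) ≤ n)]
  have hb' : (1 : ℝ) ≤ b := by exact_mod_cast hb
  calc _ = (σ * t * (w : ℝ) ^ σ) * ((n + 1) * n ^ (b - 1)) + (b + 1) * n.choose b := by ring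
    _ ≤ (σ * t * (w : ℝ) ^ σ) * (2 * n ^ b) + (b + 1) * n ^ b := by gcongr
    _ = n ^ b * (2 * (σ * t * (w : ℝ) ^ σ) + (b + 1)) := by ring
    _ ≤ n ^ b * ((b + 1) * P) := by gcongr; nlinarith
    _ = (b + 1) * (n ^ b * P) := by ring

lemma betaExp_pos (b σ : ℕ) : 0 < betaExp (b + 2) σ := by
  rw [betaExp, Nat.cast_add, Nat.cast_two, add_sub_cancel_right]
  positivity

lemma betaExp_mul (b σ : ℕ) : betaExp (b + 2) σ * ((b * (σ + 1) + 1 : ℕ) : ℝ) = 1 := by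
  rw [betaExp]
  push_cast
  rw [add_sub_cancel_right]
  exact one_div_mul_cancel (by positivity)

lemma rpow_betaExp_pow_succ (b σ n : ℕ) :
    ((n : ℝ) ^ betaExp (b + 2) σ) ^ (b * (σ + 1)) * (n : ℝ) ^ betaExp (b + 2) σ = n := by
  rw [← pow_succ, ← Real.rpow_mul_natCast n.cast_nonneg, betaExp_mul, Real.rpow_one]

lemma rpow_add_one_sub_betaExp (b σ : ℕ) (hn : 1 ≤ n) :
    (n : ℝ) ^ ((b : ℝ) + 1 - betaExp (b + 2) σ) =
      n ^ b * ((n : ℝ) ^ betaExp (b + 2) σ) ^ (b * (σ + 1)) := by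
  have hn0 : (0 : ℝ) < n := by exact_mod_cast hn
  have hβ := betaExp_mul b σ
  rw [← Real.rpow_mul_natCast hn0.le, ← Real.rpow_natCast, ← Real.rpow_add hn0]
  congr 1
  push_cast at hβ ⊢
  linarith

lemma eventually_exists_errors_le (hb : 1 ≤ b) (hσ : 1 ≤ σ) (t : ℕ) :
    ∀ᶠ n : ℕ in atTop, ∃ k : ℕ, b + 1 ≤ k ∧ ∀ w : ℕ, w * k.choose b ≤ (b + 1) * (t * n ^ b) →
      2 * ((w : ℝ) ^ σ * (t * n ^ b)) + 2 * (t * t) * n ^ b + k * (t * n ^ b) ≤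
          (n : ℝ) ^ ((b : ℝ) + 1 - betaExp (b + 2) σ) ∧
        ((n : ℝ) + 1) * (σ * (w ^ σ * (t * n ^ (b - 1)))) + (b + 1) * n.choose b ≤
          (b + 1) * (n : ℝ) ^ ((b : ℝ) + 1 - betaExp (b + 2) σ) := by
  have hy : Tendsto (fun n : ℕ => (n : ℝ) ^ betaExp (b + 2) σ) atTop atTop :=
    (tendsto_rpow_atTop (betaExp_pos b σ)).comp tendsto_natCast_atTop_atTop
  have hbσ : b * (σ + 1) ≠ 0 := Nat.mul_ne_zero (Nat.one_le_iff_ne_zero.1 hb) σ.succ_ne_zero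
  have hP := (tendsto_pow_atTop hbσ).comp hy
  filter_upwards [eventually_ge_atTop 1, hy.eventually_ge_atTop 1,
    hy.eventually_ge_atTop (8 * σ * t * hubConst b t ^ σ),
    hP.eventually_ge_atTop (8 * (t + 1) * (b + 1)), hP.eventually_ge_atTop (8 * (t : ℝ) ^ 2),
    hP.eventually_ge_atTop 2] with n hn hy1 hyc hPk hPt hP2
  rw [rpow_add_one_sub_betaExp b σ hn]
  obtain ⟨k, hbk, hkP, hPk'⟩ := exists_nat_mul_le_and_div_le b t hPk
  refine ⟨k, hbk, fun w hw => ?_⟩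
  have hwc : w ≤ hubConst b t * ((n : ℝ) ^ betaExp (b + 2) σ) ^ b :=
    le_hubConst_mul_pow (zero_lt_two.trans_le hP2) hPk' <| by
      simp only [Function.comp_apply, rpow_betaExp_pow_succ]
      exact_mod_cast hw
  have hwσ := mul_mul_pow_le hb hy1 (by positivity) hyc hwc
  exact ⟨excess_le hσ hwσ hPt hkP, shadow_excess_le hb hn hwσ hP2⟩

end Asymptotics

/-! ### Structural stability -/

section CrossCut

variable [DecidableEq α] {H : Finset (Finset α)} {S : Finset α}

lemma exists_isCrossCut_card_eq (h : 0 < crossCutNum H) :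
    ∃ S ⊆ hverts H, IsCrossCut H S ∧ #S = crossCutNum H := by
  obtain ⟨S, hS, hcard⟩ := Nat.sInf_mem (Nat.nonempty_of_pos_sInf h)
  have hS' : IsCrossCut H (S ∩ hverts H) := fun e he => by
    rw [inter_comm S, ← inter_assoc, inter_eq_left.2 (subset_hverts he), hS e he]
  refine ⟨S ∩ hverts H, inter_subset_right, hS', le_antisymm ?_ (Nat.sInf_le ⟨_, hS', rfl⟩)⟩
  exact (card_le_card inter_subset_left).trans hcard.le

lemma crossCutNum_le_card_hverts (H : Finset (Finset α)) : crossCutNum H ≤ #(hverts H) := by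
  obtain h | h := Nat.eq_zero_or_pos (crossCutNum H)
  · exact h ▸ Nat.zero_le _
  · obtain ⟨S, hS, -, hcard⟩ := exists_isCrossCut_card_eq h
    exact hcard ▸ card_le_card hS

lemma IsCrossCut.image [DecidableEq β] (hS : IsCrossCut H S) (hSH : S ⊆ hverts H) {φ : α → β}
    (hφ : Set.InjOn φ ↑(hverts H)) : IsCrossCut (H.image (Finset.image φ)) (S.image φ) :=
  forall_mem_image.2 fun e he => by
    have he' := subset_hverts he
    rw [← image_inter_of_injOn e S (hφ.mono (Set.union_subset (coe_subset.2 he')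
      (coe_subset.2 hSH))), card_image_of_injOn (hφ.mono (coe_subset.2
      (inter_subset_left.trans he'))), hS e he]

end CrossCut

lemma card_mul_card_commonLink_add_le {n : ℕ} (F : Finset (Finset (Fin n))) (A : Finset (Fin n)) :
    #A * #(commonLink F A) + #{e ∈ F | #(e ∩ A) ≠ 1} ≤ #F := by
  have hinter : ∀ p ∈ A ×ˢ commonLink F A, insert p.1 p.2 ∩ A = {p.1} := fun p hp => by
    obtain ⟨ha, hD⟩ := mem_product.1 hp
    rw [insert_inter_of_mem ha, disjoint_iff_inter_eq_empty.1 (mem_commonLink.1 hD).1,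
      insert_empty_eq]
  have hle : #A * #(commonLink F A) ≤ #{e ∈ F | #(e ∩ A) = 1} := by
    rw [← card_product]
    refine card_le_card_of_injOn (fun p => insert p.1 p.2) (fun p hp => mem_filter.2
      ⟨?_, by rw [hinter p hp, card_singleton]⟩) fun p hp q hq hpq => ?_
    · obtain ⟨ha, hD⟩ := mem_product.1 hp
      exact (mem_commonLink.1 hD).2 p.1 ha
    · have hfst : p.1 = q.1 := singleton_injective <| by
        rw [← hinter p hp, ← hinter q hq]
        exact congrArg (· ∩ A) hpq
      have herase : ∀ p ∈ A ×ˢ commonLink F A, (insert p.1 p.2).erase p.1 = p.2 := fun p hp =>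
        erase_insert (disjoint_right.1 (mem_commonLink.1 (mem_product.1 hp).2).1
          (mem_product.1 hp).1)
      refine Prod.ext hfst ?_
      rw [← herase p hp, ← herase q hq, ← hfst]
      exact congrArg (erase · p.1) (hpq.trans (by rw [hfst]))
  calc _ ≤ #{e ∈ F | #(e ∩ A) = 1} + #{e ∈ F | #(e ∩ A) ≠ 1} := Nat.add_le_add_right hle _
    _ = #F := card_filter_add_card_filter_not _

section Tree

variable [DecidableEq α] {b τ : ℕ} {T H : Finset (Finset α)} {S : Finset α}

lemma IsRTree.exists_choose_le_card_commonLink (hT : IsRTree (b + 2) T) (hk : Reducible 2 T)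
    (hHT : H ⊆ T) (hS : IsCrossCut H S) (hSτ : #S ≤ τ + 1) (hb : 1 ≤ b) {n k t : ℕ}
    (ht : #(hverts T) = t) (hbk : b + 1 ≤ k) (hτ : τ < n) {F : Finset (Finset (Fin n))}
    (hF : (F : Set (Finset (Fin n))).Sized (b + 2)) (hFH : ¬ ContainsCopy F H) :
    ∃ (w ε : ℕ) (A : Finset (Fin n)), w * k.choose b ≤ (b + 1) * (t * n ^ b) ∧ #A = τ ∧
      #F + ε ≤ τ * n.choose (b + 1) +
        (2 * (w ^ (τ + 1) * (t * n ^ b)) + 2 * (t * t) * n ^ b + k * (t * n ^ b)) ∧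
      n.choose (b + 1) ≤ #(commonLink F A) + (b + 1) * (ε + n.choose b) +
        (n + 1) * ((τ + 1) * (w ^ (τ + 1) * (t * n ^ (b - 1)))) := by
  have : Nonempty (Fin n) := Fin.pos_iff_nonempty.1 (by omega)
  have hFT : ¬ ContainsCopy F T := fun h => hFH (h.mono hHT)
  have hne : ∀ A : Finset (Fin n), #A = τ + 1 → A.Nonempty := fun A hA => card_pos.1 (by omega)
  have hrich : #(richSets t F) ≤ t * n ^ b := by
    simpa using hT.card_le_pow hk ht.le hFT one_le_two (sized_richSets hF)
      fun Y hY => extendable_one_of_mem_richSets hY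
  have hpoor : #(poorEdges F (richSets t F)) ≤ 2 * (t * t) * n ^ b := by
    simpa using hT.card_poorEdges_le hk ht.le (by omega) hF hFT
  have hlinkF : ∀ A, #A = τ + 1 → #(commonLink F A) ≤ t * n ^ b := fun A hA =>
    hT.card_commonLink_le_pow hk ht.le hHT hS hFH (hne A hA) (hSτ.trans_eq hA.symm)
      one_le_two hF fun X hX => extendable_zero_of_mem hX
  have hlink_rich : ∀ A, #A = τ + 1 → #(commonLink (richSets t F) A) ≤ t * n ^ (b - 1) :=
    fun A hA => hT.card_commonLink_le_pow hk ht.le hHT hS hFH (hne A hA) (hSτ.trans_eq hA.symm)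
      le_rfl (sized_richSets hF) fun X hX => extendable_one_of_mem_richSets hX
  obtain ⟨w, ε, A, hw, hA, hFε, hlink⟩ := _root_.exists_choose_le_card_commonLink hF
    (sized_richSets hF) hbk hτ.le hlinkF hlink_rich
  exact ⟨w, ε, A, hw.trans (by gcongr), hA, hFε.trans (by gcongr), hlink⟩

lemma IsRTree.eventually_exists_commonLink (hT : IsRTree (b + 2) T) (hk : Reducible 2 T)
    (hHT : H ⊆ T) (hS : IsCrossCut H S) (hSτ : #S ≤ τ + 1) (hb : 1 ≤ b) :
    ∀ᶠ n : ℕ in Filter.atTop, ∀ F : Finset (Finset (Fin n)),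
      (F : Set (Finset (Fin n))).Sized (b + 2) → ¬ ContainsCopy F H →
        ∃ (ε : ℕ) (A : Finset (Fin n)), #A = τ ∧
          (#F + ε : ℝ) ≤ τ * n.choose (b + 1) + (n : ℝ) ^ ((b : ℝ) + 1 - betaExp (b + 2) (τ + 1)) ∧
          (n.choose (b + 1) : ℝ) ≤ #(commonLink F A) +
            (b + 1) * (ε + (n : ℝ) ^ ((b : ℝ) + 1 - betaExp (b + 2) (τ + 1))) := by
  filter_upwards [eventually_exists_errors_le hb (Nat.le_add_left 1 τ) #(hverts T),
    Filter.eventually_gt_atTop τ] with n ⟨k, hbk, herr⟩ hτ F hF hFH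
  obtain ⟨w, ε, A, hw, hA, hFε, hlink⟩ :=
    hT.exists_choose_le_card_commonLink hk hHT hS hSτ hb rfl hbk hτ hF hFH
  obtain ⟨herrF, herr_link⟩ := herr w hw
  rify at hFε hlink
  push_cast at herr_link
  exact ⟨ε, A, hA, by linarith, by linarith⟩

end Tree

theorem stability_general [DecidableEq α] {r σ : ℕ} (hr : 3 ≤ r) {H : Finset (Finset α)}
    (hemb : ∃ T : Finset (Finset ℕ), IsRTree r T ∧ Reducible 2 T ∧ ContainsCopy T H)
    (hσ : crossCutNum H = σ) (hσ1 : 1 ≤ σ) :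
    ∃ N : ℕ, ∀ n : ℕ, N ≤ n → ∀ (K : ℝ) (F : Finset (Finset (Fin n))), (∀ E ∈ F, #E = r) →
      ¬ ContainsCopy F H →
      ((σ : ℝ) - 1) * n.choose (r - 1) - K * (n : ℝ) ^ ((r : ℝ) - 1 - betaExp r σ) ≤ #F →
      ∃ A : Finset (Fin n), #A = σ - 1 ∧
        (n.choose (r - 1) : ℝ) - ((r : ℝ) - 1) * (K + 2) * (n : ℝ) ^ ((r : ℝ) - 1 - betaExp r σ) ≤
          #(commonLink F A) ∧
        (#{E ∈ F | #(E ∩ A) ≠ 1} : ℝ) ≤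
          (((σ : ℝ) - 1) * ((r : ℝ) - 1) * (K + 2) + 1) *
            (n : ℝ) ^ ((r : ℝ) - 1 - betaExp r σ) := by
  obtain ⟨T, hT, hk, φ, hφ, hφT⟩ := hemb
  obtain ⟨S, hSH, hS, hScard⟩ := exists_isCrossCut_card_eq (hσ1.trans_eq hσ.symm)
  obtain ⟨b, rfl⟩ := Nat.exists_eq_add_of_le' (show 2 ≤ r by omega)
  obtain ⟨τ, rfl⟩ := Nat.exists_eq_add_of_le' hσ1
  obtain ⟨N, hN⟩ := Filter.eventually_atTop.1 <| hT.eventually_exists_commonLink hk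
    (image_subset_iff.2 hφT) (hS.image hSH hφ) (card_image_le.trans (hScard.trans hσ).le) (by omega)
  refine ⟨N, fun n hn K F hF hFH hcard => ?_⟩
  have hFH' : ¬ ContainsCopy F (H.image (Finset.image φ)) := fun h =>
    hFH (h.trans ⟨φ, hφ, fun e he => mem_image_of_mem _ he⟩)
  obtain ⟨ε, A, hA, hFε, hlink⟩ := hN n hn F (fun E hE => hF E hE) hFH'
  have hr' : ((b + 2 : ℕ) : ℝ) - 1 = b + 1 := by push_cast; ring
  have hτ' : ((τ + 1 : ℕ) : ℝ) - 1 = τ := by push_cast; ring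
  simp only [hr', hτ', Nat.add_sub_cancel, show b + 2 - 1 = b + 1 from rfl] at hcard ⊢
  set Z := (n : ℝ) ^ ((b : ℝ) + 1 - betaExp (b + 2) (τ + 1))
  have hε : (ε : ℝ) ≤ (K + 1) * Z := by linarith
  have hlink' : (n.choose (b + 1) : ℝ) - (b + 1) * (K + 2) * Z ≤ #(commonLink F A) := by
    have : (b + 1 : ℝ) * (ε + Z) ≤ (b + 1) * ((K + 1) * Z + Z) := by gcongr
    linarith
  refine ⟨A, hA, hlink', ?_⟩
  have hcount : (τ * #(commonLink F A) + #{E ∈ F | #(E ∩ A) ≠ 1} : ℝ) ≤ #F := by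
    exact_mod_cast hA ▸ card_mul_card_commonLink_add_le F A
  have hmul := mul_le_mul_of_nonneg_left hlink' (Nat.cast_nonneg (α := ℝ) τ)
  linarith [(Nat.cast_nonneg ε : (0 : ℝ) ≤ ε)]

/-- Structural stability. If an `H`-free family `F` of `r`-subsets of `[n]` has at least
`(σ-1)·C(n,r-1) - K·n^(r-1-β)` members, then there is a `(σ-1)`-set `A` whose common link
is almost complete, and almost all members of `F` meet `A` in exactly one vertex. -/
theorem stability {α : Type*} [DecidableEq α]
    (r s σ : ℕ) (hr : 4 ≤ r)
    (H : Finset (Finset α)) (hH : ∀ E ∈ H, E.card = r) (hs : (H.sup id).card = s)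
    (hemb : ∃ T : Finset (Finset ℕ), IsRTree r T ∧ Reducible 2 T ∧ ContainsCopy T H)
    (hcc : ∃ S : Finset α, IsCrossCut H S)
    (hσ : crossCutNum H = σ) (hσ2 : 2 ≤ σ) :
    ∃ N : ℕ, ∀ n : ℕ, N ≤ n → ∀ K : ℝ, 0 ≤ K →
      ∀ F : Finset (Finset (Fin n)), (∀ E ∈ F, E.card = r) → ¬ ContainsCopy F H →
      ((σ : ℝ) - 1) * (Nat.choose n (r - 1)) - K * (n : ℝ) ^ ((r : ℝ) - 1 - betaExp r σ)
          ≤ (F.card : ℝ) →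
      ∃ A : Finset (Fin n), A.card = σ - 1 ∧
        ((Nat.choose n (r - 1) : ℝ) -
            ((r : ℝ) - 1) * (K + 2 * (s : ℝ) ^ 2) * (n : ℝ) ^ ((r : ℝ) - 1 - betaExp r σ)
          ≤ ((commonLink F A).card : ℝ)) ∧
        (((F.filter (fun E => (E ∩ A).card ≠ 1)).card : ℝ) ≤
          (((σ : ℝ) - 1) * ((r : ℝ) - 1) * (K + 2 * (s : ℝ) ^ 2) + 2 * (s : ℝ) ^ 2) *
            (n : ℝ) ^ ((r : ℝ) - 1 - betaExp r σ)) := by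
  have hs1 : 1 ≤ (s : ℝ) ^ 2 := one_le_pow₀ <| by
    have hσs : σ ≤ s := hσ ▸ hs ▸ crossCutNum_le_card_hverts H
    exact_mod_cast (by omega : 1 ≤ s)
  obtain ⟨N, hN⟩ := stability_general (by omega) hemb hσ (by omega)
  refine ⟨N, fun n hn K _ F hFr hF hcard => ?_⟩
  obtain ⟨A, hA, hlink, hA1⟩ := hN n hn (K + 2 * (s : ℝ) ^ 2 - 2) F hFr hF <| hcard.trans' <| by
    gcongr
    linarith
  rw [sub_add_cancel] at hlink hA1
  exact ⟨A, hA, hlink, hA1.trans (by gcongr; linarith)⟩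

end
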